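/- arXiv:1505.01388 — 2 statements merged into one kernel-verified Lean document; each statement's English description precedes it below -/
import Mathlib

section
/- Let α ∈ (1,2), let X be a real Banach space, let {T(t)}_{t>0} be a Riemann-Liouville α-order fractional cosine function on X, and let A be its generator. Then x ∈ D(A) if and only if the limit lim_{t→0+} (T(t)x − (t^{α-2}/Γ(α-1)) x)/t^{2α-2} exists, and in that case Ax = Γ(2α-1) · lim_{t→0+} (T(t)x − (t^{α-2}/Γ(α-1)) x)/t^{2α-2}. -/
/-!
Write `J^β` for the Riemann-Liouville integral, `g(t) = t^(α-2)/Γ(α-1)`, and put `C = J^(2-α) T`,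
`S = J^1 T`, `R = J^2 T`, families of bounded operators. Since `J^(2-α) g = 1`, the generator is
`Ax = lim Γ(α+1) t^(-α) (C(t)x - x)`.

*From `T` to the generator.* If `T(t)x - g(t)x` behaves like `t^(2α-2) z` at `0`, then its
fractional integral of order `2-α` behaves like `Γ(2α-1)/Γ(α+1) t^α z`. This Abelian statement is
`Reg.frac`; it follows from the substitution `σ = t u` and dominated convergence against the beta
density.

*From the generator to `T`.* The functional equation expresses the double integral with kernel
`(t+s-σ-τ)^(1-α)` as `Γ(2-α)` times `C(t)S(s) + S(t)C(s) - S(t+s)`. That integral, integrated over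
`[0,s]` in the second time, and integrated over `[0,t]` in the first, gives by Fubini two double
integrals which differ only by boundary kernels `(t-σ)^(2-α)` and `(s-τ)^(2-α)`, and these are again
values of `J^(3-α) T` and `S`. Subtracting yields the symmetric identity
`(C(t) - 1) R(s) x = R(t) (C(s) - 1) x` (`IsRLFracCosine.symm_identity`). Multiplying by
`Γ(α+1) s^(-α)` and letting `s → 0` gives `C(t)x - x = R(t) A x` for `x` in the domain of `A`, that
is `J^(2-α)(T x - g x) = J^2 T A x`. Applying `J^(α-1)` and differentiating, one obtains
`T(t)x - g(t)x = J^α T(t) A x` (`remainder_eq_of_genLimit`), and the right-hand side is asymptotic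
to `t^(2α-2) A x / Γ(2α-1)` by the Abelian statement.

The uniform boundedness principle gives `‖T(t)‖ ≤ M t^(α-2)` on bounded intervals, which makes the
operators `J^β T(t)` bounded and the double integrals absolutely convergent.
-/

open MeasureTheory Filter Topology Set

/-- Riemann-Liouville fractional integral of order `β` of `f` at `t`:
`J_t^β f(t) = (1/Γ(β)) ∫_0^t (t-σ)^{β-1} f(σ) dσ`. -/
noncomputable def RLint {X : Type*} [NormedAddCommGroup X] [NormedSpace ℝ X]
    (β t : ℝ) (f : ℝ → X) : X :=
  (Real.Gamma β)⁻¹ • ∫ σ in (0:ℝ)..t, (t - σ) ^ (β - 1) • f σ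

/-- `{T(t)}_{t>0}` is a Riemann-Liouville `α`-order fractional cosine function. -/
def IsRLFracCosine {X : Type*} [NormedAddCommGroup X] [NormedSpace ℝ X]
    (α : ℝ) (T : ℝ → X →L[ℝ] X) : Prop :=
  (∀ x : X, ContinuousOn (fun t => T t x) (Set.Ioi (0:ℝ))) ∧
  (∀ x : X, Tendsto (fun t : ℝ => t ^ (2 - α) • T t x) (𝓝[>] (0:ℝ))
      (𝓝 ((Real.Gamma (α - 1))⁻¹ • x))) ∧
  (∀ x : X, ∀ t > (0:ℝ), ∀ s > (0:ℝ),
    Real.Gamma (2 - α) • (∫ σ in (0:ℝ)..(t + s), T σ x) =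
      (∫ σ in (0:ℝ)..t, ∫ τ in (0:ℝ)..s, (t - σ) ^ (1 - α) • T σ (T τ x)) +
      (∫ σ in (0:ℝ)..t, ∫ τ in (0:ℝ)..s, (s - τ) ^ (1 - α) • T σ (T τ x)) -
      (∫ σ in (0:ℝ)..t, ∫ τ in (0:ℝ)..s, (t + s - σ - τ) ^ (1 - α) • T σ (T τ x)))

/-- `GenLimit α T x y` says `x ∈ D(A)` with `Ax = y`, for the generator `A` of
`{T(t)}_{t>0}`:  `y = lim_{t→0+} Γ(α+1) t^{-α} J_t^{2-α}(T(t)x − (t^{α-2}/Γ(α-1)) x)`. -/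
def GenLimit {X : Type*} [NormedAddCommGroup X] [NormedSpace ℝ X]
    (α : ℝ) (T : ℝ → X →L[ℝ] X) (x y : X) : Prop :=
  Tendsto (fun t : ℝ => (Real.Gamma (α + 1) * t ^ (-α)) •
      RLint (2 - α) t (fun r => T r x - (r ^ (α - 2) / Real.Gamma (α - 1)) • x))
    (𝓝[>] (0:ℝ)) (𝓝 y)

section Helpers

variable {X : Type*} [NormedAddCommGroup X] [NormedSpace ℝ X]

/-! ### Beta integrals -/

theorem beta_intervalIntegrable {a b : ℝ} (ha : 0 < a) (hb : 0 < b) :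
    IntervalIntegrable (fun u : ℝ => (1 - u) ^ (b - 1) * u ^ (a - 1)) volume 0 1 := by
  have h := Complex.betaIntegral_convergent (u := a) (v := b) (by simpa) (by simpa)
  refine h.norm.congr ?_
  intro u hu
  rw [uIoc_of_le zero_le_one] at hu
  have h1 : ((u : ℂ) ^ ((a : ℂ) - 1)) = ((u ^ (a - 1) : ℝ) : ℂ) := by
    rw [Complex.ofReal_cpow hu.1.le]; simp
  have h2 : ((1 - (u : ℂ)) ^ ((b : ℂ) - 1)) = (((1 - u) ^ (b - 1) : ℝ) : ℂ) := by
    rw [Complex.ofReal_cpow (by linarith [hu.2])]; simp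
  simp only [h1, h2, norm_mul, Complex.norm_real, Real.norm_eq_abs]
  rw [abs_of_nonneg (Real.rpow_nonneg hu.1.le _),
    abs_of_nonneg (Real.rpow_nonneg (by linarith [hu.2]) _), mul_comm]

theorem beta_integral {a b : ℝ} (ha : 0 < a) (hb : 0 < b) :
    ∫ u in (0:ℝ)..1, (1 - u) ^ (b - 1) * u ^ (a - 1) =
      Real.Gamma a * Real.Gamma b / Real.Gamma (a + b) := by
  have h := ProbabilityTheory.beta_eq_betaIntegralReal a b ha hb
  rw [ProbabilityTheory.beta] at h
  rw [h, Complex.betaIntegral]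
  have : ∫ u in (0:ℝ)..1, (u : ℂ) ^ ((a : ℂ) - 1) * (1 - (u : ℂ)) ^ ((b : ℂ) - 1) =
      ∫ u in (0:ℝ)..1, (((1 - u) ^ (b - 1) * u ^ (a - 1) : ℝ) : ℂ) := by
    refine intervalIntegral.integral_congr fun u hu => ?_
    rw [uIcc_of_le zero_le_one] at hu
    simp only [Complex.ofReal_mul]
    rw [Complex.ofReal_cpow hu.1, Complex.ofReal_cpow (by linarith [hu.2]), mul_comm]
    simp
  rw [this, intervalIntegral.integral_ofReal, Complex.ofReal_re]

/-- The substitution `σ = t u` in a Riemann-Liouville integral. -/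
theorem frac_subst {β t : ℝ} (ht : 0 < t) (f : ℝ → X) :
    ∫ σ in (0:ℝ)..t, (t - σ) ^ (β - 1) • f σ =
      t ^ β • ∫ u in (0:ℝ)..1, (1 - u) ^ (β - 1) • f (t * u) := by
  have h := intervalIntegral.smul_integral_comp_mul_left (a := 0) (b := 1)
    (fun σ => (t - σ) ^ (β - 1) • f σ) t
  rw [mul_zero, mul_one] at h
  rw [← h]
  have h2 : t ^ β = t * t ^ (β - 1) := by
    rw [Real.rpow_sub_one ht.ne']; field_simp
  rw [h2, mul_smul, ← intervalIntegral.integral_smul (t ^ (β - 1))]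
  congr 1
  refine intervalIntegral.integral_congr fun u hu => ?_
  rw [uIcc_of_le zero_le_one] at hu
  simp only [smul_smul]
  rw [← Real.mul_rpow ht.le (by linarith [hu.2])]
  ring_nf

theorem weight_intervalIntegrable {a b τ t : ℝ} (ha : 0 < a) (hb : 0 < b) (h : τ < t) :
    IntervalIntegrable (fun r : ℝ => (t - r) ^ (a - 1) * (r - τ) ^ (b - 1)) volume τ t := by
  have hd : 0 < t - τ := by linarith
  have h1 := beta_intervalIntegrable hb ha
  have h2 := (h1.comp_mul_left (c := (t - τ)⁻¹)).comp_sub_right τ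
  have h3 := h2.const_mul ((t - τ) ^ (a - 1) * (t - τ) ^ (b - 1))
  have e1 : 0 / (t - τ)⁻¹ + τ = τ := by simp
  have e2 : 1 / (t - τ)⁻¹ + τ = t := by field_simp; ring
  rw [e1, e2] at h3
  refine h3.congr ?_
  intro r hr
  rw [uIoc_of_le h.le] at hr
  have hr1 : 0 ≤ (t - τ)⁻¹ * (r - τ) := mul_nonneg (by positivity) (by linarith [hr.1])
  have hr2 : 1 - (t - τ)⁻¹ * (r - τ) = (t - τ)⁻¹ * (t - r) := by field_simp; ring
  simp only [hr2]
  rw [Real.mul_rpow (by positivity) (by linarith [hr.2]),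
    Real.mul_rpow (by positivity) (by linarith [hr.1]), Real.inv_rpow hd.le, Real.inv_rpow hd.le]
  have := (Real.rpow_pos_of_pos hd (a - 1)).ne'
  have := (Real.rpow_pos_of_pos hd (b - 1)).ne'
  field_simp

theorem weight_integral {a b τ t : ℝ} (ha : 0 < a) (hb : 0 < b) (h : τ < t) :
    ∫ r in τ..t, (t - r) ^ (a - 1) * (r - τ) ^ (b - 1) =
      Real.Gamma a * Real.Gamma b / Real.Gamma (a + b) * (t - τ) ^ (a + b - 1) := by
  have hd : 0 < t - τ := by linarith
  have h1 := intervalIntegral.integral_comp_add_left (a := 0) (b := t - τ)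
    (fun r => (t - r) ^ (a - 1) * (r - τ) ^ (b - 1)) τ
  simp only [add_zero, add_sub_cancel] at h1
  rw [← h1]
  have h2 := frac_subst (β := a) hd (fun r : ℝ => r ^ (b - 1))
  simp only [smul_eq_mul] at h2
  have h3 : ∫ r in (0:ℝ)..(t - τ), (t - (τ + r)) ^ (a - 1) * (τ + r - τ) ^ (b - 1) =
      ∫ r in (0:ℝ)..(t - τ), (t - τ - r) ^ (a - 1) * r ^ (b - 1) := by
    congr 1; ext r; ring_nf
  rw [h3, h2]
  have h4 : ∫ u in (0:ℝ)..1, (1 - u) ^ (a - 1) * ((t - τ) * u) ^ (b - 1) =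
      (t - τ) ^ (b - 1) * ∫ u in (0:ℝ)..1, (1 - u) ^ (a - 1) * u ^ (b - 1) := by
    rw [← intervalIntegral.integral_const_mul]
    refine intervalIntegral.integral_congr fun u hu => ?_
    rw [uIcc_of_le zero_le_one] at hu
    rw [Real.mul_rpow hd.le hu.1]; ring
  rw [h4, beta_integral hb ha, ← mul_assoc, ← Real.rpow_add hd]
  ring_nf

/-! ### Functions with power behaviour at the origin -/

/-- `Reg p f z`: on `(0,∞)` the function `f` is `t^p` times a function that extends continuously
to `0` with value `z`. The continuous factor is taken to be defined on all of `ℝ`; its values on the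
negative half-line are irrelevant. -/
def Reg (p : ℝ) (f : ℝ → X) (z : X) : Prop :=
  ∃ H : ℝ → X, Continuous H ∧ H 0 = z ∧ ∀ t > (0:ℝ), f t = t ^ p • H t

theorem Reg.of_tendsto {p : ℝ} {f : ℝ → X} {z : X} (hf : ContinuousOn f (Ioi 0))
    (hz : Tendsto (fun t => t ^ (-p) • f t) (𝓝[>] 0) (𝓝 z)) : Reg p f z := by
  refine ⟨fun t => if t ≤ 0 then z else t ^ (-p) • f t, ?_, by simp, ?_⟩
  · rw [continuous_iff_continuousAt]
    intro t
    rcases lt_trichotomy t 0 with h | rfl | h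
    · refine (continuousAt_const (y := z)).congr ?_
      filter_upwards [Iio_mem_nhds h] with s hs
      simp [(show s < 0 from hs).le]
    · rw [continuousAt_iff_continuous_left'_right']
      constructor
      · refine (continuousWithinAt_const (b := z)).congr ?_ (by simp)
        intro s hs
        simp [(show s < 0 from hs).le]
      · rw [ContinuousWithinAt]
        simp only [le_refl, if_true]
        refine hz.congr' ?_
        filter_upwards [self_mem_nhdsWithin] with s hs
        simp [show 0 < s from hs]
    · have h1 : ContinuousAt (fun t => t ^ (-p) • f t) t :=
        (Real.continuousAt_rpow_const _ _ (Or.inl h.ne')).smul (hf.continuousAt (Ioi_mem_nhds h))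
      refine h1.congr ?_
      filter_upwards [Ioi_mem_nhds h] with s hs
      simp [show 0 < s from hs]
  · intro t ht
    simp only [ht.not_ge, if_false, smul_smul]
    rw [← Real.rpow_add ht]; simp

theorem Reg.tendsto {p : ℝ} {f : ℝ → X} {z : X} (h : Reg p f z) :
    Tendsto (fun t => t ^ (-p) • f t) (𝓝[>] 0) (𝓝 z) := by
  obtain ⟨H, hH, rfl, hf⟩ := h
  refine (hH.continuousWithinAt (s := Ioi 0) (x := 0)).congr' ?_
  filter_upwards [self_mem_nhdsWithin] with s hs
  have hs : 0 < s := hs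
  rw [hf s hs, smul_smul, ← Real.rpow_add hs]; simp

theorem Reg.continuousOn {p : ℝ} {f : ℝ → X} {z : X} (h : Reg p f z) :
    ContinuousOn f (Ioi 0) := by
  obtain ⟨H, hH, rfl, hf⟩ := h
  refine ContinuousOn.congr (f := fun t => t ^ p • H t) ?_ (fun t ht => hf t ht)
  refine ContinuousOn.smul ?_ hH.continuousOn
  intro t ht
  exact (Real.continuousAt_rpow_const _ _ (Or.inl (ne_of_gt ht))).continuousWithinAt

theorem Reg.bound {p : ℝ} {f : ℝ → X} {z : X} (h : Reg p f z) (b : ℝ) :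
    ∃ M, ∀ t ∈ Ioc 0 b, ‖f t‖ ≤ M * t ^ p := by
  obtain ⟨H, hH, rfl, hf⟩ := h
  obtain ⟨M, hM⟩ := (isCompact_Icc (a := 0) (b := b)).exists_bound_of_continuousOn
    hH.continuousOn
  refine ⟨M, fun t ht => ?_⟩
  rw [hf t ht.1, norm_smul, Real.norm_of_nonneg (Real.rpow_nonneg ht.1.le _), mul_comm]
  gcongr
  · exact Real.rpow_nonneg ht.1.le _
  · exact hM t ⟨ht.1.le, ht.2⟩

theorem Reg.intervalIntegrable {p : ℝ} {f : ℝ → X} {z : X} (h : Reg p f z) (hp : -1 < p)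
    {b : ℝ} (hb : 0 ≤ b) : IntervalIntegrable f volume 0 b := by
  obtain ⟨H, hH, rfl, hf⟩ := h
  refine IntervalIntegrable.congr (f := fun t => t ^ p • H t) ?_ ?_
  · intro t ht
    rw [uIoc_of_le hb] at ht
    exact (hf t ht.1).symm
  · exact (intervalIntegral.intervalIntegrable_rpow' hp).smul_continuousOn hH.continuousOn

theorem Reg.intervalIntegrable_weight {p β : ℝ} {f : ℝ → X} {z : X} (h : Reg p f z)
    (hp : -1 < p) (hβ : 0 < β) {t : ℝ} (ht : 0 < t) :
    IntervalIntegrable (fun σ => (t - σ) ^ (β - 1) • f σ) volume 0 t := by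
  obtain ⟨H, hH, rfl, hf⟩ := h
  have hw := weight_intervalIntegrable (a := β) (b := p + 1) hβ (by linarith) ht
  refine IntervalIntegrable.congr ?_ (hw.smul_continuousOn hH.continuousOn)
  intro σ hσ
  rw [uIoc_of_le ht.le] at hσ
  simp only
  rw [hf σ hσ.1, smul_smul]
  simp

/-- Abelian statement: if `f(t) ~ t^p z` at `0`, then
`J^β f(t) ~ Γ(p+1)/Γ(p+β+1) t^(p+β) z`. The substitution `σ = t u` exhibits the continuous factor
of `J^β f` as an average of the one of `f` against a beta density. -/
theorem Reg.frac [CompleteSpace X] {p β : ℝ} {f : ℝ → X} {z : X} (h : Reg p f z)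
    (hp : -1 < p) (hβ : 0 < β) :
    Reg (p + β) (fun t => RLint β t f)
      ((Real.Gamma (p + 1) / Real.Gamma (p + β + 1)) • z) := by
  obtain ⟨H, hH, rfl, hf⟩ := h
  have hG : Real.Gamma β ≠ 0 := (Real.Gamma_pos_of_pos hβ).ne'
  have hw := beta_intervalIntegrable (a := p + 1) (b := β) (by linarith) hβ
  refine ⟨fun t => (Real.Gamma β)⁻¹ •
    ∫ u in (0:ℝ)..1, ((1 - u) ^ (β - 1) * u ^ (p + 1 - 1)) • H (t * u), ?_, ?_, ?_⟩
  · refine Continuous.const_smul ?_ _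
    rw [continuous_iff_continuousAt]
    intro t₀
    obtain ⟨M, hM⟩ := (isCompact_Icc (a := -(|t₀| + 1)) (b := |t₀| + 1)).exists_bound_of_continuousOn
      hH.continuousOn
    refine intervalIntegral.continuousAt_of_dominated_interval
      (bound := fun u => ((1 - u) ^ (β - 1) * u ^ (p + 1 - 1)) * M) ?_ ?_ (hw.mul_const M) ?_
    · refine Eventually.of_forall fun t => ?_
      have := hw.smul_continuousOn (g := fun u => H (t * u)) (by fun_prop)
      exact (intervalIntegrable_iff.1 this).aestronglyMeasurable
    · filter_upwards [Icc_mem_nhds (show t₀ - 1 < t₀ by linarith) (show t₀ < t₀ + 1 by linarith)]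
        with t ht
      refine Eventually.of_forall fun u hu => ?_
      rw [uIoc_of_le zero_le_one] at hu
      have hw0 : 0 ≤ (1 - u) ^ (β - 1) * u ^ (p + 1 - 1) :=
        mul_nonneg (Real.rpow_nonneg (by linarith [hu.2]) _) (Real.rpow_nonneg hu.1.le _)
      rw [norm_smul, Real.norm_of_nonneg hw0]
      refine mul_le_mul_of_nonneg_left (hM _ ?_) hw0
      rw [mem_Icc, ← abs_le, abs_mul, abs_of_pos hu.1]
      have : |t| ≤ |t₀| + 1 := by
        have h1 : |t - t₀| ≤ 1 := abs_le.2 ⟨by linarith [ht.1], by linarith [ht.2]⟩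
        have := abs_add_le (t - t₀) t₀
        rw [sub_add_cancel] at this; linarith
      nlinarith [abs_nonneg t, hu.1, hu.2]
    · refine Eventually.of_forall fun u hu => ?_
      exact Continuous.continuousAt (by fun_prop)
  · simp only [zero_mul]
    rw [intervalIntegral.integral_smul_const, beta_integral (by linarith) hβ, smul_smul]
    congr 1
    rw [show p + 1 + β = p + β + 1 by ring]
    field_simp
  · intro t ht
    simp only [RLint]
    rw [frac_subst ht, smul_comm, add_comm p β, Real.rpow_add ht, mul_smul,
      smul_comm (t ^ p), ← intervalIntegral.integral_smul (t ^ p)]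
    congr 2
    refine intervalIntegral.integral_congr_ae (Eventually.of_forall fun u hu => ?_)
    rw [uIoc_of_le zero_le_one] at hu
    rw [hf _ (mul_pos ht hu.1), smul_smul, smul_smul, Real.mul_rpow ht.le hu.1.le]
    congr 1
    ring_nf

/-! ### Fubini arguments and the semigroup law of fractional integration -/

/-- Fubini for a kernel `w (r, p)` supported on `c p < r < t`, applied to an integrable `V`. The
kernel is nonnegative there and its integrals over `r` are bounded uniformly in `p`, which gives the
integrability on the product. -/
theorem volterra_fubini [CompleteSpace X] {P : Type*} [MeasurableSpace P] {μ : Measure P} [SFinite μ]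
    {V : P → X} (hV : Integrable V μ) {c : P → ℝ} (hc : Measurable c) {t B : ℝ} (ht : 0 ≤ t)
    {w : ℝ × P → ℝ} (hw : Measurable w)
    (hct : ∀ᵐ p ∂μ, 0 ≤ c p ∧ c p ≤ t)
    (hw0 : ∀ᵐ p ∂μ, ∀ r ∈ Ioo (c p) t, 0 ≤ w (r, p))
    (hwi : ∀ᵐ p ∂μ, IntervalIntegrable (fun r => w (r, p)) volume (c p) t)
    (hwB : ∀ᵐ p ∂μ, ∫ r in (c p)..t, w (r, p) ≤ B) :
    Integrable (fun q : ℝ × P => {q : ℝ × P | c q.2 < q.1}.indicator w q • V q.2)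
        ((volume.restrict (Ioo 0 t)).prod μ) ∧
      ∫ r in (0:ℝ)..t, ∫ p, {q : ℝ × P | c q.2 < q.1}.indicator w (r, p) • V p ∂μ =
        ∫ p, (∫ r in (c p)..t, w (r, p)) • V p ∂μ := by
  have hS : MeasurableSet {q : ℝ × P | c q.2 < q.1} :=
    measurableSet_lt (hc.comp measurable_snd) measurable_fst
  have hΘ : Measurable ({q : ℝ × P | c q.2 < q.1}.indicator w) := hw.indicator hS
  have hind : ∀ p, (fun r => {q : ℝ × P | c q.2 < q.1}.indicator w (r, p)) =
      (Ioi (c p)).indicator (fun r => w (r, p)) := by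
    intro p; ext r; simp [indicator]
  have hres : ∀ p, 0 ≤ c p → (volume.restrict (Ioo 0 t)).restrict (Ioi (c p)) =
      volume.restrict (Ioo (c p) t) := by
    intro p hp
    rw [Measure.restrict_restrict measurableSet_Ioi]
    congr 1
    ext r
    simp only [mem_inter_iff, mem_Ioi, mem_Ioo]
    constructor
    · rintro ⟨h1, h2, h3⟩; exact ⟨h1, h3⟩
    · rintro ⟨h1, h3⟩; exact ⟨h1, by linarith, h3⟩
  have hval : ∀ p, 0 ≤ c p ∧ c p ≤ t →
      ∫ r in Ioo 0 t, {q : ℝ × P | c q.2 < q.1}.indicator w (r, p) =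
      ∫ r in (c p)..t, w (r, p) := by
    intro p hp
    rw [hind p, integral_indicator measurableSet_Ioi, hres p hp.1,
      intervalIntegral.integral_of_le hp.2, integral_Ioc_eq_integral_Ioo]
  have hint : ∀ᵐ p ∂μ, Integrable (fun r => {q : ℝ × P | c q.2 < q.1}.indicator w (r, p))
      (volume.restrict (Ioo 0 t)) := by
    filter_upwards [hct, hwi] with p hp hi
    rw [hind p, integrable_indicator_iff measurableSet_Ioi, IntegrableOn, hres p hp.1]
    exact (intervalIntegrable_iff_integrableOn_Ioo_of_le hp.2).1 hi
  have hmeas : AEStronglyMeasurable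
      (fun q : ℝ × P => {q : ℝ × P | c q.2 < q.1}.indicator w q • V q.2)
      ((volume.restrict (Ioo 0 t)).prod μ) :=
    hΘ.aestronglyMeasurable.smul hV.aestronglyMeasurable.comp_snd
  have hI : Integrable (fun q : ℝ × P => {q : ℝ × P | c q.2 < q.1}.indicator w q • V q.2)
        ((volume.restrict (Ioo 0 t)).prod μ) := by
    rw [integrable_prod_iff' hmeas]
    refine ⟨?_, ?_⟩
    · filter_upwards [hint] with p hp
      exact hp.smul_const _
    · refine Integrable.mono' (hV.norm.const_mul B)
        hmeas.norm.prod_swap.integral_prod_right' ?_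
      filter_upwards [hct, hw0, hwB] with p hp h0 hB
      have h1 : ∫ r in Ioo 0 t, ‖{q : ℝ × P | c q.2 < q.1}.indicator w (r, p) • V p‖ =
          ∫ r in Ioo 0 t, {q : ℝ × P | c q.2 < q.1}.indicator w (r, p) * ‖V p‖ := by
        refine setIntegral_congr_fun measurableSet_Ioo fun r hr => ?_
        have : 0 ≤ {q : ℝ × P | c q.2 < q.1}.indicator w (r, p) :=
          indicator_apply_nonneg fun h => h0 r ⟨h, hr.2⟩
        simp only [norm_smul, Real.norm_of_nonneg this]
      rw [Real.norm_of_nonneg (integral_nonneg fun r => norm_nonneg _), h1,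
        integral_mul_const, hval p hp]
      gcongr
  refine ⟨hI, ?_⟩
  rw [intervalIntegral.integral_of_le ht, integral_Ioc_eq_integral_Ioo,
    integral_integral_swap hI]
  refine integral_congr_ae ?_
  filter_upwards [hct] with p hp
  rw [integral_smul_const, hval p hp]

/-- The semigroup law `J^a J^b = J^(a+b)`. The condition `1 ≤ a + b` makes the kernel
`(t - τ)^(a+b-1)` bounded, as `volterra_fubini` requires. -/
theorem RLint_RLint [CompleteSpace X] {p a b t : ℝ} {f : ℝ → X} {z : X} (h : Reg p f z)
    (hp : -1 < p) (ha : 0 < a) (hb : 0 < b) (hab : 1 ≤ a + b) (ht : 0 < t) :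
    RLint a t (fun r => RLint b r f) = RLint (a + b) t f := by
  have hV : Integrable f (volume.restrict (Ioo 0 t)) :=
    (intervalIntegrable_iff_integrableOn_Ioo_of_le ht.le).1 (h.intervalIntegrable hp ht.le)
  have hmem : ∀ᵐ τ ∂(volume.restrict (Ioo 0 t)), τ ∈ Ioo 0 t :=
    ae_restrict_mem measurableSet_Ioo
  have hGa := Real.Gamma_pos_of_pos ha
  have hGb := Real.Gamma_pos_of_pos hb
  have hGab := Real.Gamma_pos_of_pos (add_pos ha hb)
  have key := (volterra_fubini (μ := volume.restrict (Ioo 0 t)) hV (c := fun τ => τ)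
    measurable_id (t := t)
    (B := Real.Gamma a * Real.Gamma b / Real.Gamma (a + b) * t ^ (a + b - 1)) ht.le
    (w := fun q => (t - q.1) ^ (a - 1) * (q.1 - q.2) ^ (b - 1)) (by fun_prop)
    (by filter_upwards [hmem] with τ hτ using ⟨hτ.1.le, hτ.2.le⟩)
    (Eventually.of_forall fun τ r hr => mul_nonneg (Real.rpow_nonneg (by linarith [hr.2]) _)
      (Real.rpow_nonneg (by linarith [hr.1]) _))
    (by filter_upwards [hmem] with τ hτ using weight_intervalIntegrable ha hb hτ.2)
    (by
      filter_upwards [hmem] with τ hτ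
      rw [weight_integral ha hb hτ.2]
      have : (t - τ) ^ (a + b - 1) ≤ t ^ (a + b - 1) :=
        Real.rpow_le_rpow (by linarith [hτ.2]) (by linarith [hτ.1]) (by linarith)
      gcongr)).2
  simp only [RLint]
  have hL : ∫ r in (0:ℝ)..t, (t - r) ^ (a - 1) •
        ((Real.Gamma b)⁻¹ • ∫ σ in (0:ℝ)..r, (r - σ) ^ (b - 1) • f σ) =
      (Real.Gamma b)⁻¹ • ∫ r in (0:ℝ)..t, ∫ τ in Ioo 0 t,
        {q : ℝ × ℝ | q.2 < q.1}.indicator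
          (fun q => (t - q.1) ^ (a - 1) * (q.1 - q.2) ^ (b - 1)) (r, τ) • f τ := by
    rw [← intervalIntegral.integral_smul]
    refine intervalIntegral.integral_congr_ae (Eventually.of_forall fun r hr => ?_)
    rw [uIoc_of_le ht.le] at hr
    rw [smul_comm]
    congr 1
    have : (fun τ => {q : ℝ × ℝ | q.2 < q.1}.indicator
          (fun q => (t - q.1) ^ (a - 1) * (q.1 - q.2) ^ (b - 1)) (r, τ) • f τ) =
        (Iio r).indicator (fun τ => (t - r) ^ (a - 1) • (r - τ) ^ (b - 1) • f τ) := by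
      ext τ
      by_cases h : τ < r <;> simp [indicator, h, smul_smul]
    rw [this, integral_indicator measurableSet_Iio, Measure.restrict_restrict measurableSet_Iio,
      show Iio r ∩ Ioo 0 t = Ioo 0 r by
        ext τ; simp only [mem_inter_iff, mem_Iio, mem_Ioo]
        exact ⟨fun h => ⟨h.2.1, h.1⟩, fun h => ⟨h.2, h.1, h.2.trans_le hr.2⟩⟩,
      integral_smul, ← integral_Ioc_eq_integral_Ioo, intervalIntegral.integral_of_le hr.1.le]
  rw [hL, key, intervalIntegral.integral_of_le ht.le, integral_Ioc_eq_integral_Ioo, smul_smul,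
    ← integral_smul, ← integral_smul]
  refine setIntegral_congr_fun measurableSet_Ioo fun τ hτ => ?_
  simp only
  rw [weight_integral ha hb hτ.2, smul_smul, smul_smul]
  congr 1
  field_simp

theorem RLint_one (t : ℝ) (f : ℝ → X) : RLint 1 t f = ∫ σ in (0:ℝ)..t, f σ := by
  simp [RLint]

/-- Integration of the double integral with kernel `(t + r - σ - τ)^e` over the second time
`r ∈ [0,s]`: the kernel is replaced by its primitive in `r` taken from `r = τ` to `r = s`. -/
theorem shift_kernel_right [CompleteSpace X] {e t s : ℝ} (he : -1 < e) (ht : 0 < t)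
    (hs : 0 < s) {V : ℝ × ℝ → X}
    (hV : Integrable V ((volume.restrict (Ioo 0 t)).prod (volume.restrict (Ioo 0 s)))) :
    ∫ r in (0:ℝ)..s, ∫ σ in (0:ℝ)..t, ∫ τ in (0:ℝ)..r, (t + r - σ - τ) ^ e • V (σ, τ) =
      ∫ p, (((t + s - p.1 - p.2) ^ (e + 1) - (t - p.1) ^ (e + 1)) / (e + 1)) • V p
        ∂((volume.restrict (Ioo 0 t)).prod (volume.restrict (Ioo 0 s))) := by
  set μ := (volume.restrict (Ioo (0:ℝ) t)).prod (volume.restrict (Ioo (0:ℝ) s)) with hμ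
  have hmem : ∀ᵐ p ∂μ, p ∈ Ioo 0 t ×ˢ Ioo 0 s := by
    rw [hμ, Measure.prod_restrict]
    exact ae_restrict_mem (measurableSet_Ioo.prod measurableSet_Ioo)
  have hker : ∀ p : ℝ × ℝ, ∫ r in p.2..s, (t + r - p.1 - p.2) ^ e =
      ((t + s - p.1 - p.2) ^ (e + 1) - (t - p.1) ^ (e + 1)) / (e + 1) := by
    intro p
    have h1 := intervalIntegral.integral_comp_add_right (a := p.2) (b := s)
      (fun v : ℝ => v ^ e) (t - p.1 - p.2)
    rw [integral_rpow (Or.inl he)] at h1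
    rw [show p.2 + (t - p.1 - p.2) = t - p.1 by ring,
      show s + (t - p.1 - p.2) = t + s - p.1 - p.2 by ring] at h1
    rw [← h1]
    congr 1; ext r; ring_nf
  have key := volterra_fubini (μ := μ) hV (c := fun p => p.2) measurable_snd (t := s)
    (B := (t + s) ^ (e + 1) / (e + 1)) hs.le
    (w := fun q => (t + q.1 - q.2.1 - q.2.2) ^ e) (by fun_prop)
    (by filter_upwards [hmem] with p hp using ⟨hp.2.1.le, hp.2.2.le⟩)
    (by
      filter_upwards [hmem] with p hp r hr
      exact Real.rpow_nonneg (by linarith [hp.1.2, hr.1]) _)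
    (by
      refine Eventually.of_forall fun p => ?_
      have h1 := (intervalIntegral.intervalIntegrable_rpow' he (a := p.2 + (t - p.1 - p.2))
        (b := s + (t - p.1 - p.2))).comp_add_right (t - p.1 - p.2)
      simp only [add_sub_cancel_right] at h1
      refine h1.congr fun r _ => ?_
      ring_nf)
    (by
      filter_upwards [hmem] with p hp
      rw [hker p]
      have h1 : (t + s - p.1 - p.2) ^ (e + 1) ≤ (t + s) ^ (e + 1) :=
        Real.rpow_le_rpow (by linarith [hp.1.2, hp.2.2]) (by linarith [hp.1.1, hp.2.1])
          (by linarith)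
      have h2 : 0 ≤ (t - p.1) ^ (e + 1) := Real.rpow_nonneg (by linarith [hp.1.2]) _
      have h3 : 0 < e + 1 := by linarith
      gcongr
      linarith)
  obtain ⟨hI, hE⟩ := key
  simp only [hker] at hE
  rw [← hE, intervalIntegral.integral_of_le hs.le, intervalIntegral.integral_of_le hs.le,
    integral_Ioc_eq_integral_Ioo, integral_Ioc_eq_integral_Ioo]
  refine integral_congr_ae ?_
  filter_upwards [hI.prod_right_ae, ae_restrict_mem measurableSet_Ioo] with r hr hrs
  rw [hμ, integral_prod _ hr, intervalIntegral.integral_of_le ht.le, integral_Ioc_eq_integral_Ioo]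
  refine setIntegral_congr_fun measurableSet_Ioo fun σ hσ => ?_
  have : (fun τ => {q : ℝ × (ℝ × ℝ) | q.2.2 < q.1}.indicator
        (fun q => (t + q.1 - q.2.1 - q.2.2) ^ e) (r, (σ, τ)) • V (σ, τ)) =
      (Iio r).indicator (fun τ => (t + r - σ - τ) ^ e • V (σ, τ)) := by
    ext τ
    by_cases h : τ < r <;> simp [indicator, h]
  rw [this, integral_indicator measurableSet_Iio, Measure.restrict_restrict measurableSet_Iio,
    show Iio r ∩ Ioo 0 s = Ioo 0 r by
      ext τ; simp only [mem_inter_iff, mem_Iio, mem_Ioo]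
      exact ⟨fun h => ⟨h.2.1, h.1⟩, fun h => ⟨h.2, h.1, h.2.trans hrs.2⟩⟩,
    ← integral_Ioc_eq_integral_Ioo, intervalIntegral.integral_of_le hrs.1.le]

/-- Counterpart of `shift_kernel_right` for integration over the first time `r ∈ [0,t]`. -/
theorem shift_kernel_left [CompleteSpace X] {e t s : ℝ} (he : -1 < e) (ht : 0 < t)
    (hs : 0 < s) {V : ℝ × ℝ → X}
    (hV : Integrable V ((volume.restrict (Ioo 0 t)).prod (volume.restrict (Ioo 0 s)))) :
    ∫ r in (0:ℝ)..t, ∫ σ in (0:ℝ)..r, ∫ τ in (0:ℝ)..s, (r + s - σ - τ) ^ e • V (σ, τ) =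
      ∫ p, (((t + s - p.1 - p.2) ^ (e + 1) - (s - p.2) ^ (e + 1)) / (e + 1)) • V p
        ∂((volume.restrict (Ioo 0 t)).prod (volume.restrict (Ioo 0 s))) := by
  set μ := (volume.restrict (Ioo (0:ℝ) t)).prod (volume.restrict (Ioo (0:ℝ) s)) with hμ
  have hmem : ∀ᵐ p ∂μ, p ∈ Ioo 0 t ×ˢ Ioo 0 s := by
    rw [hμ, Measure.prod_restrict]
    exact ae_restrict_mem (measurableSet_Ioo.prod measurableSet_Ioo)
  have hker : ∀ p : ℝ × ℝ, ∫ r in p.1..t, (r + s - p.1 - p.2) ^ e =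
      ((t + s - p.1 - p.2) ^ (e + 1) - (s - p.2) ^ (e + 1)) / (e + 1) := by
    intro p
    have h1 := intervalIntegral.integral_comp_add_right (a := p.1) (b := t)
      (fun v : ℝ => v ^ e) (s - p.1 - p.2)
    rw [integral_rpow (Or.inl he)] at h1
    rw [show p.1 + (s - p.1 - p.2) = s - p.2 by ring,
      show t + (s - p.1 - p.2) = t + s - p.1 - p.2 by ring] at h1
    rw [← h1]
    congr 1; ext r; ring_nf
  have key := volterra_fubini (μ := μ) hV (c := fun p => p.1) measurable_fst (t := t)
    (B := (t + s) ^ (e + 1) / (e + 1)) ht.le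
    (w := fun q => (q.1 + s - q.2.1 - q.2.2) ^ e) (by fun_prop)
    (by filter_upwards [hmem] with p hp using ⟨hp.1.1.le, hp.1.2.le⟩)
    (by
      filter_upwards [hmem] with p hp r hr
      exact Real.rpow_nonneg (by linarith [hp.2.2, hr.1]) _)
    (by
      refine Eventually.of_forall fun p => ?_
      have h1 := (intervalIntegral.intervalIntegrable_rpow' he (a := p.1 + (s - p.1 - p.2))
        (b := t + (s - p.1 - p.2))).comp_add_right (s - p.1 - p.2)
      simp only [add_sub_cancel_right] at h1
      refine h1.congr fun r _ => ?_
      ring_nf)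
    (by
      filter_upwards [hmem] with p hp
      rw [hker p]
      have h1 : (t + s - p.1 - p.2) ^ (e + 1) ≤ (t + s) ^ (e + 1) :=
        Real.rpow_le_rpow (by linarith [hp.1.2, hp.2.2]) (by linarith [hp.1.1, hp.2.1])
          (by linarith)
      have h2 : 0 ≤ (s - p.2) ^ (e + 1) := Real.rpow_nonneg (by linarith [hp.2.2]) _
      have h3 : 0 < e + 1 := by linarith
      gcongr
      linarith)
  obtain ⟨hI, hE⟩ := key
  simp only [hker] at hE
  rw [← hE, intervalIntegral.integral_of_le ht.le, intervalIntegral.integral_of_le ht.le,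
    integral_Ioc_eq_integral_Ioo, integral_Ioc_eq_integral_Ioo]
  refine integral_congr_ae ?_
  filter_upwards [hI.prod_right_ae, ae_restrict_mem measurableSet_Ioo] with r hr hrt
  rw [hμ, integral_prod _ hr]
  have : (fun σ => ∫ τ in Ioo 0 s, {q : ℝ × (ℝ × ℝ) | q.2.1 < q.1}.indicator
        (fun q => (q.1 + s - q.2.1 - q.2.2) ^ e) (r, (σ, τ)) • V (σ, τ)) =
      (Iio r).indicator (fun σ => ∫ τ in (0:ℝ)..s, (r + s - σ - τ) ^ e • V (σ, τ)) := by
    ext σ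
    simp only [intervalIntegral.integral_of_le hs.le, integral_Ioc_eq_integral_Ioo]
    by_cases h : σ < r <;> simp [indicator, h]
  rw [this, integral_indicator measurableSet_Iio, Measure.restrict_restrict measurableSet_Iio,
    show Iio r ∩ Ioo 0 t = Ioo 0 r by
      ext τ; simp only [mem_inter_iff, mem_Iio, mem_Ioo]
      exact ⟨fun h => ⟨h.2.1, h.1⟩, fun h => ⟨h.2, h.1, h.2.trans hrt.2⟩⟩,
    ← integral_Ioc_eq_integral_Ioo, intervalIntegral.integral_of_le hrt.1.le]

/-! ### Fractional integrals of the cosine function and the symmetric identity -/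

/-- `JT T β t y` is `J_t^β (T(t) y)`, the fractional integral of order `β` of the orbit of `y`. -/
noncomputable def JT (T : ℝ → X →L[ℝ] X) (β t : ℝ) (y : X) : X :=
  RLint β t (fun σ => T σ y)

section Cosine

variable {α : ℝ} {T : ℝ → X →L[ℝ] X}

theorem IsRLFracCosine.reg (hT : IsRLFracCosine α T) (x : X) :
    Reg (α - 2) (fun t => T t x) ((Real.Gamma (α - 1))⁻¹ • x) := by
  refine Reg.of_tendsto (hT.1 x) ?_
  rw [neg_sub]
  exact hT.2.1 x

variable [CompleteSpace X]

theorem IsRLFracCosine.reg_JT (hα : α ∈ Ioo (1:ℝ) 2) (hT : IsRLFracCosine α T) (x : X)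
    {β : ℝ} (hβ : 0 < β) :
    Reg (α - 2 + β) (fun t => JT T β t x) ((Real.Gamma (α - 1 + β))⁻¹ • x) := by
  have h := (hT.reg x).frac (by linarith [hα.1]) hβ
  rw [smul_smul, show α - 2 + 1 = α - 1 by ring, show α - 2 + β + 1 = α - 1 + β by ring] at h
  have hG : Real.Gamma (α - 1) ≠ 0 := (Real.Gamma_pos_of_pos (by linarith [hα.1])).ne'
  rwa [show Real.Gamma (α - 1) / Real.Gamma (α - 1 + β) * (Real.Gamma (α - 1))⁻¹ =
    (Real.Gamma (α - 1 + β))⁻¹ by field_simp] at h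

/-- Uniform boundedness principle applied to `t^(2-α) T(t)` on `(0, b]`. -/
theorem IsRLFracCosine.op_bound (hT : IsRLFracCosine α T) (b : ℝ) :
    ∃ M, 0 ≤ M ∧ ∀ t ∈ Ioc 0 b, ‖T t‖ ≤ M * t ^ (α - 2) := by
  obtain ⟨M, hM⟩ := banach_steinhaus (g := fun t : Ioc 0 b => (t : ℝ) ^ (2 - α) • T t) (by
    intro x
    obtain ⟨M, hM⟩ := (hT.reg x).bound b
    refine ⟨M, fun t => ?_⟩
    have ht := t.2.1
    have h1 := hM t t.2
    rw [smul_apply, norm_smul,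
      Real.norm_of_nonneg (Real.rpow_nonneg ht.le _)]
    calc (t : ℝ) ^ (2 - α) * ‖T t x‖ ≤ (t : ℝ) ^ (2 - α) * (M * (t : ℝ) ^ (α - 2)) := by
          gcongr
      _ = M * ((t : ℝ) ^ (2 - α) * (t : ℝ) ^ (α - 2)) := by ring
      _ = M := by rw [← Real.rpow_add ht]; simp)
  refine ⟨max M 0, le_max_right _ _, fun t ht => ?_⟩
  have h1 := hM ⟨t, ht⟩
  have hp := Real.rpow_pos_of_pos ht.1 (2 - α)
  simp only [norm_smul] at h1
  rw [Real.norm_of_nonneg hp.le] at h1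
  have h2 : t ^ (α - 2) = (t ^ (2 - α))⁻¹ := by rw [← Real.rpow_neg ht.1.le]; ring_nf
  rw [h2, ← div_eq_mul_inv, le_div_iff₀ hp, mul_comm]
  exact h1.trans (le_max_left _ _)

/-- The operators `J^β T(t)` are linear and bounded. -/
theorem IsRLFracCosine.exists_clm (hα : α ∈ Ioo (1:ℝ) 2) (hT : IsRLFracCosine α T)
    {β t : ℝ} (hβ : 0 < β) (ht : 0 < t) :
    ∃ L : X →L[ℝ] X, ∀ y, L y = JT T β t y := by
  obtain ⟨M, hM0, hM⟩ := hT.op_bound t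
  have hp : -1 < α - 2 := by linarith [hα.1]
  have hi := fun y => (hT.reg y).intervalIntegrable_weight hp hβ ht
  let L : X →ₗ[ℝ] X :=
    { toFun := fun y => JT T β t y
      map_add' := by
        intro y z
        simp only [JT, RLint, map_add, smul_add]
        rw [intervalIntegral.integral_add (hi y) (hi z), smul_add]
      map_smul' := by
        intro c y
        simp only [JT, RLint, map_smul, RingHom.id_apply]
        rw [smul_comm c, ← intervalIntegral.integral_smul c]
        congr 1
        exact intervalIntegral.integral_congr fun σ _ =>
          smul_comm ((t - σ) ^ (β - 1)) c (T σ y) }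
  have hw := weight_intervalIntegrable (a := β) (b := α - 1) hβ (by linarith [hα.1]) ht
  refine ⟨L.mkContinuous (|(Real.Gamma β)⁻¹| *
    ∫ σ in (0:ℝ)..t, (t - σ) ^ (β - 1) * (σ - 0) ^ (α - 1 - 1) * M) ?_, fun y => rfl⟩
  intro y
  change ‖JT T β t y‖ ≤ _
  rw [JT, RLint, norm_smul, Real.norm_eq_abs, mul_assoc]
  gcongr
  rw [← intervalIntegral.integral_mul_const]
  refine intervalIntegral.norm_integral_le_of_norm_le ht.le ?_
    ((hw.mul_const M).mul_const ‖y‖)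
  refine Eventually.of_forall fun σ hσ => ?_
  have h1 := (T σ).le_opNorm y
  have h2 := hM σ hσ
  have h0 : 0 ≤ (t - σ) ^ (β - 1) := Real.rpow_nonneg (by linarith [hσ.2]) _
  rw [norm_smul, Real.norm_of_nonneg h0, sub_zero, show α - 1 - 1 = α - 2 by ring]
  calc (t - σ) ^ (β - 1) * ‖T σ y‖ ≤ (t - σ) ^ (β - 1) * (M * σ ^ (α - 2) * ‖y‖) := by
        gcongr; exact h1.trans (by gcongr)
    _ = _ := by ring

theorem IsRLFracCosine.integral_JT (hα : α ∈ Ioo (1:ℝ) 2) (hT : IsRLFracCosine α T)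
    {β t : ℝ} (hβ : 0 < β) (ht : 0 < t) (y : X) :
    ∫ r in (0:ℝ)..t, JT T β r y = JT T (1 + β) t y := by
  rw [← RLint_one]
  exact RLint_RLint (hT.reg y) (by linarith [hα.1]) one_pos hβ (by linarith) ht

theorem IsRLFracCosine.intervalIntegrable_JT (hα : α ∈ Ioo (1:ℝ) 2) (hT : IsRLFracCosine α T)
    {β t : ℝ} (hβ : 0 < β) (ht : 0 ≤ t) (y : X) :
    IntervalIntegrable (fun r => JT T β r y) volume 0 t :=
  (hT.reg_JT hα y hβ).intervalIntegrable (by linarith [hα.1]) ht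

theorem IsRLFracCosine.continuousOn_prod (hT : IsRLFracCosine α T) (x : X) :
    ContinuousOn (fun p : ℝ × ℝ => T p.1 (T p.2 x)) (Ioi 0 ×ˢ Ioi 0) := by
  rintro ⟨σ, τ⟩ ⟨hσ, hτ⟩
  have hσ : 0 < σ := hσ
  have hτ : 0 < τ := hτ
  obtain ⟨M, hM0, hM⟩ := hT.op_bound (σ + 1)
  refine ContinuousAt.continuousWithinAt ?_
  have c1 : ContinuousAt (fun p : ℝ × ℝ => T p.1 (T τ x)) (σ, τ) :=
    ContinuousAt.comp (f := fun p : ℝ × ℝ => p.1) (g := fun r => T r (T τ x))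
      ((hT.1 (T τ x)).continuousAt (Ioi_mem_nhds hσ)) continuousAt_fst
  have c2 : ContinuousAt (fun p : ℝ × ℝ => T p.2 x) (σ, τ) :=
    ContinuousAt.comp (f := fun p : ℝ × ℝ => p.2) (g := fun r => T r x)
      ((hT.1 x).continuousAt (Ioi_mem_nhds hτ)) continuousAt_snd
  have c3 : ContinuousAt (fun p : ℝ × ℝ => M * p.1 ^ (α - 2)) (σ, τ) :=
    continuousAt_const.mul (continuousAt_fst.rpow_const (Or.inl hσ.ne'))
  have h0 : Tendsto (fun p : ℝ × ℝ => T p.1 (T p.2 x - T τ x)) (𝓝 (σ, τ)) (𝓝 0) := by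
    have hlim : Tendsto (fun p : ℝ × ℝ => M * p.1 ^ (α - 2) * ‖T p.2 x - T τ x‖)
        (𝓝 (σ, τ)) (𝓝 0) := by
      have := c3.tendsto.mul ((c2.tendsto.sub_const (T τ x)).norm)
      simpa using this
    refine squeeze_zero_norm' ?_ hlim
    filter_upwards [continuousAt_fst.preimage_mem_nhds
      (Ioo_mem_nhds (show (0:ℝ) < (σ, τ).1 from hσ) (show (σ, τ).1 < σ + 1 by simp))] with p hp
    refine ((T p.1).le_opNorm _).trans ?_
    gcongr
    exact hM _ ⟨hp.1, hp.2.le⟩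
  have := h0.add c1.tendsto
  simpa [ContinuousAt, ← map_add] using this

theorem IsRLFracCosine.integrable_prod (hα : α ∈ Ioo (1:ℝ) 2) (hT : IsRLFracCosine α T)
    {t s : ℝ} (ht : 0 < t) (hs : 0 < s) (x : X) :
    Integrable (fun p : ℝ × ℝ => T p.1 (T p.2 x))
      ((volume.restrict (Ioo 0 t)).prod (volume.restrict (Ioo 0 s))) := by
  obtain ⟨M, hM0, hM⟩ := hT.op_bound t
  have hp : -1 < α - 2 := by linarith [hα.1]
  have h1 : Integrable (fun σ : ℝ => M * σ ^ (α - 2)) (volume.restrict (Ioo 0 t)) :=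
    (intervalIntegrable_iff_integrableOn_Ioo_of_le ht.le).1
      ((intervalIntegral.intervalIntegrable_rpow' hp).const_mul M)
  have h2 : Integrable (fun τ : ℝ => ‖T τ x‖) (volume.restrict (Ioo 0 s)) :=
    (intervalIntegrable_iff_integrableOn_Ioo_of_le hs.le).1
      ((hT.reg x).intervalIntegrable hp hs.le).norm
  refine Integrable.mono' (h1.mul_prod h2) ?_ ?_
  · rw [Measure.prod_restrict]
    refine ContinuousOn.aestronglyMeasurable ?_ (measurableSet_Ioo.prod measurableSet_Ioo)
    exact (hT.continuousOn_prod x).mono (prod_mono (fun _ h => h.1) (fun _ h => h.1))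
  · rw [Measure.prod_restrict]
    filter_upwards [ae_restrict_mem (measurableSet_Ioo.prod measurableSet_Ioo)] with p hp
    refine ((T p.1).le_opNorm _).trans ?_
    gcongr
    exact hM _ ⟨hp.1.1, hp.1.2.le⟩

/-- The functional equation, solved for the term with the shifted kernel `(t+s-σ-τ)^(1-α)` and
written with the operators `J^(2-α) T` and `J^1 T`. -/
theorem IsRLFracCosine.shift_eq (hα : α ∈ Ioo (1:ℝ) 2) (hT : IsRLFracCosine α T)
    {t s : ℝ} (ht : 0 < t) (hs : 0 < s) (x : X) :
    ∫ σ in (0:ℝ)..t, ∫ τ in (0:ℝ)..s, (t + s - σ - τ) ^ (1 - α) • T σ (T τ x) =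
      Real.Gamma (2 - α) • (JT T (2 - α) t (JT T 1 s x) + JT T 1 t (JT T (2 - α) s x) -
        JT T 1 (t + s) x) := by
  have hG : Real.Gamma (2 - α) ≠ 0 := (Real.Gamma_pos_of_pos (by linarith [hα.2])).ne'
  have hp : -1 < α - 2 := by linarith [hα.1]
  have h := hT.2.2 x t ht s hs
  have hA : ∫ σ in (0:ℝ)..t, ∫ τ in (0:ℝ)..s, (t - σ) ^ (1 - α) • T σ (T τ x) =
      Real.Gamma (2 - α) • JT T (2 - α) t (JT T 1 s x) := by
    rw [JT, RLint, smul_smul, mul_inv_cancel₀ hG, one_smul]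
    congr 1; ext σ
    rw [intervalIntegral.integral_smul, JT, RLint_one,
      (T σ).intervalIntegral_comp_comm ((hT.reg x).intervalIntegrable hp hs.le)]
    ring_nf
  have hB : ∫ σ in (0:ℝ)..t, ∫ τ in (0:ℝ)..s, (s - τ) ^ (1 - α) • T σ (T τ x) =
      Real.Gamma (2 - α) • JT T 1 t (JT T (2 - α) s x) := by
    rw [JT, RLint_one, ← intervalIntegral.integral_smul]
    congr 1; ext σ
    rw [← map_smul, JT, RLint, smul_smul, mul_inv_cancel₀ hG, one_smul,
      ← (T σ).intervalIntegral_comp_comm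
        ((hT.reg x).intervalIntegrable_weight hp (by linarith [hα.2]) hs)]
    simp only [map_smul]
    ring_nf
  rw [hA, hB] at h
  have hE : JT T 1 (t + s) x = ∫ σ in (0:ℝ)..(t + s), T σ x := RLint_one _ _
  rw [smul_sub, smul_add, hE, h]
  abel

/-- The symmetric identity `(C(t) - 1) R(s) x = R(t) (C(s) - 1) x` for `C = J^(2-α) T` and
`R = J^2 T`. It is the difference of `shift_eq` integrated over the second time and integrated over
the first; the terms in `t + s` cancel. -/
theorem IsRLFracCosine.symm_identity (hα : α ∈ Ioo (1:ℝ) 2) (hT : IsRLFracCosine α T)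
    {t s : ℝ} (ht : 0 < t) (hs : 0 < s) (x : X) :
    JT T (2 - α) t (JT T 2 s x) - JT T 2 s x =
      JT T 2 t (JT T (2 - α) s x) - JT T 2 t x := by
  have hγ : 0 < 2 - α := by linarith [hα.2]
  have hG : Real.Gamma (2 - α) ≠ 0 := (Real.Gamma_pos_of_pos hγ).ne'
  have hp : -1 < α - 2 := by linarith [hα.1]
  have hV := hT.integrable_prod hα ht hs x
  have two : (1:ℝ) + 1 = 2 := by norm_num
  have hS := fun (b : ℝ) (hb : 0 ≤ b) => hT.intervalIntegrable_JT hα one_pos hb x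
  have hR := shift_kernel_right (e := 1 - α) (by linarith) ht hs hV
  have hL := shift_kernel_left (e := 1 - α) (by linarith) ht hs hV
  -- `hR'` and `hL'` evaluate the left-hand sides of `hR` and `hL` by means of `shift_eq`
  have hR' : ∫ r in (0:ℝ)..s, ∫ σ in (0:ℝ)..t, ∫ τ in (0:ℝ)..r,
        (t + r - σ - τ) ^ (1 - α) • T σ (T τ x) =
      Real.Gamma (2 - α) • (JT T (2 - α) t (JT T 2 s x) +
        JT T 1 t (JT T (1 + (2 - α)) s x) - (JT T 2 (t + s) x - JT T 2 t x)) := by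
    obtain ⟨C, hC⟩ := hT.exists_clm hα hγ ht
    obtain ⟨S, hS'⟩ := hT.exists_clm hα one_pos ht
    have i1 : IntervalIntegrable (fun r => JT T 1 r x) volume 0 s := hS s hs.le
    have i2 := hT.intervalIntegrable_JT hα hγ hs.le x
    have i3 : IntervalIntegrable (fun r => JT T 1 (t + r) x) volume 0 s := by
      have h1 : IntervalIntegrable (fun r => JT T 1 r x) volume t (t + s) :=
        (hS t ht.le).symm.trans (hS (t + s) (by linarith))
      have := h1.comp_add_left t
      simpa using this
    have hi1 := C.intervalIntegral_comp_comm i1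
    have hi2 := S.intervalIntegral_comp_comm i2
    simp only [hC] at hi1
    simp only [hS'] at hi2
    have j1 : IntervalIntegrable (fun r => JT T (2 - α) t (JT T 1 r x)) volume 0 s := by
      have : IntervalIntegrable (fun r => C (JT T 1 r x)) volume 0 s :=
        ⟨C.integrable_comp i1.1, C.integrable_comp i1.2⟩
      simpa only [hC] using this
    have j2 : IntervalIntegrable (fun r => JT T 1 t (JT T (2 - α) r x)) volume 0 s := by
      have : IntervalIntegrable (fun r => S (JT T (2 - α) r x)) volume 0 s :=
        ⟨S.integrable_comp i2.1, S.integrable_comp i2.2⟩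
      simpa only [hS'] using this
    have hi3 : ∫ r in (0:ℝ)..s, JT T 1 (t + r) x = JT T 2 (t + s) x - JT T 2 t x := by
      rw [intervalIntegral.integral_comp_add_left (fun r => JT T 1 r x), add_zero,
        ← intervalIntegral.integral_interval_sub_left (hS (t + s) (by linarith)) (hS t ht.le),
        hT.integral_JT hα one_pos (by linarith), hT.integral_JT hα one_pos ht, two]
    rw [hT.integral_JT hα one_pos hs, two] at hi1
    rw [hT.integral_JT hα hγ hs] at hi2
    rw [← hi3, ← hi1, ← hi2, ← intervalIntegral.integral_add j1 j2,
      ← intervalIntegral.integral_sub (j1.add j2) i3, ← intervalIntegral.integral_smul]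
    refine intervalIntegral.integral_congr_ae (Eventually.of_forall fun r hr => ?_)
    rw [uIoc_of_le hs.le] at hr
    exact hT.shift_eq hα ht hr.1 x
  have hL' : ∫ r in (0:ℝ)..t, ∫ σ in (0:ℝ)..r, ∫ τ in (0:ℝ)..s,
        (r + s - σ - τ) ^ (1 - α) • T σ (T τ x) =
      Real.Gamma (2 - α) • (JT T (1 + (2 - α)) t (JT T 1 s x) +
        JT T 2 t (JT T (2 - α) s x) - (JT T 2 (t + s) x - JT T 2 s x)) := by
    have j1 := hT.intervalIntegrable_JT hα hγ ht.le (JT T 1 s x)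
    have j2 := hT.intervalIntegrable_JT hα one_pos ht.le (JT T (2 - α) s x)
    have i3 : IntervalIntegrable (fun r => JT T 1 (r + s) x) volume 0 t := by
      have h1 : IntervalIntegrable (fun r => JT T 1 r x) volume s (t + s) :=
        (hS s hs.le).symm.trans (hS (t + s) (by linarith))
      have := h1.comp_add_right s
      simpa using this
    have hi3 : ∫ r in (0:ℝ)..t, JT T 1 (r + s) x = JT T 2 (t + s) x - JT T 2 s x := by
      rw [intervalIntegral.integral_comp_add_right (fun r => JT T 1 r x), zero_add,
        ← intervalIntegral.integral_interval_sub_left (hS (t + s) (by linarith)) (hS s hs.le),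
        hT.integral_JT hα one_pos (by linarith), hT.integral_JT hα one_pos hs, two]
    have hi2 : ∫ r in (0:ℝ)..t, JT T 1 r (JT T (2 - α) s x) = JT T 2 t (JT T (2 - α) s x) := by
      rw [hT.integral_JT hα one_pos ht, two]
    rw [← hi3, ← hT.integral_JT hα hγ ht, ← hi2,
      ← intervalIntegral.integral_add j1 j2,
      ← intervalIntegral.integral_sub (j1.add j2) i3, ← intervalIntegral.integral_smul]
    refine intervalIntegral.integral_congr_ae (Eventually.of_forall fun r hr => ?_)
    rw [uIoc_of_le ht.le] at hr
    exact hT.shift_eq hα hr.1 hs x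
  simp only at hR hL
  rw [show 1 - α + 1 = 2 - α by ring] at hR hL
  have hΓ : Real.Gamma (1 + (2 - α)) = (2 - α) * Real.Gamma (2 - α) := by
    rw [add_comm, Real.Gamma_add_one hγ.ne']
  have hΓ0 : Real.Gamma (1 + (2 - α)) ≠ 0 := by rw [hΓ]; exact mul_ne_zero hγ.ne' hG
  set μ := (volume.restrict (Ioo (0:ℝ) t)).prod (volume.restrict (Ioo (0:ℝ) s)) with hμ
  have hmem : ∀ᵐ p ∂μ, p ∈ Ioo 0 t ×ˢ Ioo 0 s := by
    rw [hμ, Measure.prod_restrict]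
    exact ae_restrict_mem (measurableSet_Ioo.prod measurableSet_Ioo)
  -- kernels `u(p)^(2-α)` with `0 ≤ u ≤ t + s` are bounded
  have hbdd : ∀ u : ℝ × ℝ → ℝ, Measurable u →
      (∀ p ∈ Ioo 0 t ×ˢ Ioo 0 s, 0 ≤ u p ∧ u p ≤ t + s) →
      Integrable (fun p => (u p) ^ (2 - α) • T p.1 (T p.2 x)) μ := by
    intro u hu hb
    refine hV.bdd_smul ((t + s) ^ (2 - α)) (hu.pow_const _).aestronglyMeasurable ?_
    filter_upwards [hmem] with p hp
    rw [Real.norm_of_nonneg (Real.rpow_nonneg (hb p hp).1 _)]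
    exact Real.rpow_le_rpow (hb p hp).1 (hb p hp).2 hγ.le
  have b0 := hbdd (fun p => t + s - p.1 - p.2) (by fun_prop) fun p hp =>
    ⟨by linarith [hp.1.2, hp.2.2], by linarith [hp.1.1, hp.2.1]⟩
  have b1 := hbdd (fun p => t - p.1) (by fun_prop) fun p hp =>
    ⟨by linarith [hp.1.2, hp.2.2], by linarith [hp.1.1, hp.2.1]⟩
  have b2 := hbdd (fun p => s - p.2) (by fun_prop) fun p hp =>
    ⟨by linarith [hp.1.2, hp.2.2], by linarith [hp.1.1, hp.2.1]⟩
  -- the boundary kernels factor, so their double integrals are products of fractional integrals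
  have hI1 : ∫ p, (t - p.1) ^ (2 - α) • T p.1 (T p.2 x) ∂μ =
      Real.Gamma (1 + (2 - α)) • JT T (1 + (2 - α)) t (JT T 1 s x) := by
    rw [hμ, integral_prod _ b1, JT, RLint, smul_smul, mul_inv_cancel₀ hΓ0, one_smul,
      intervalIntegral.integral_of_le ht.le, integral_Ioc_eq_integral_Ioo]
    congr 1; ext σ
    simp only
    rw [integral_smul, JT, RLint_one,
      ← (T σ).intervalIntegral_comp_comm ((hT.reg x).intervalIntegrable hp hs.le),
      intervalIntegral.integral_of_le hs.le, integral_Ioc_eq_integral_Ioo, add_sub_cancel_left]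
  have hI2 : ∫ p, (s - p.2) ^ (2 - α) • T p.1 (T p.2 x) ∂μ =
      Real.Gamma (1 + (2 - α)) • JT T 1 t (JT T (1 + (2 - α)) s x) := by
    rw [hμ, integral_prod _ b2, JT, RLint_one, ← intervalIntegral.integral_smul,
      intervalIntegral.integral_of_le ht.le, integral_Ioc_eq_integral_Ioo]
    congr 1; ext σ
    rw [← map_smul, JT, RLint, smul_smul, mul_inv_cancel₀ hΓ0, one_smul,
      ← (T σ).intervalIntegral_comp_comm
        ((hT.reg x).intervalIntegrable_weight hp (by linarith) hs),
      intervalIntegral.integral_of_le hs.le, integral_Ioc_eq_integral_Ioo, add_sub_cancel_left]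
    simp only [map_smul]
  have hsplit : ∀ u : ℝ × ℝ → ℝ,
      Integrable (fun p => (u p) ^ (2 - α) • T p.1 (T p.2 x)) μ →
      ∫ p, (((t + s - p.1 - p.2) ^ (2 - α) - (u p) ^ (2 - α)) / (2 - α)) •
        T p.1 (T p.2 x) ∂μ =
      (2 - α)⁻¹ • ((∫ p, (t + s - p.1 - p.2) ^ (2 - α) • T p.1 (T p.2 x) ∂μ) -
        ∫ p, (u p) ^ (2 - α) • T p.1 (T p.2 x) ∂μ) := by
    intro u hu
    rw [← integral_sub b0 hu, ← integral_smul]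
    congr 1; ext p
    rw [← sub_smul, smul_smul, div_eq_inv_mul]
  rw [hsplit (fun p => t - p.1) b1, hI1, hR', hΓ] at hR
  rw [hsplit (fun p => s - p.2) b2, hI2, hL', hΓ] at hL
  have hcancel : ∀ v : X, (2 - α)⁻¹ • ((2 - α) * Real.Gamma (2 - α)) • v =
      Real.Gamma (2 - α) • v := by
    intro v
    rw [smul_smul, inv_mul_cancel_left₀ hγ.ne']
  rw [smul_sub (2 - α)⁻¹, hcancel] at hR hL
  apply smul_right_injective X hG
  simp only
  linear_combination (norm := module) hR - hL

end Cosine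

/-! ### The generator -/

theorem RLint_congr {β t : ℝ} (ht : 0 < t) {f g : ℝ → X} (h : ∀ r > 0, f r = g r) :
    RLint β t f = RLint β t g := by
  simp only [RLint]
  congr 1
  refine intervalIntegral.integral_congr_ae (Eventually.of_forall fun r hr => ?_)
  rw [uIoc_of_le ht.le] at hr
  rw [h r hr.1]

/-- Functions continuous on `(0,∞)` and integrable at `0` agree if their primitives do. -/
theorem eq_of_integral_eq [CompleteSpace X] {p q : ℝ} {f g : ℝ → X} {y z : X}
    (hf : Reg p f y) (hg : Reg q g z) (hp : -1 < p) (hq : -1 < q)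
    (h : ∀ t > 0, ∫ r in (0:ℝ)..t, f r = ∫ r in (0:ℝ)..t, g r) {t : ℝ} (ht : 0 < t) :
    f t = g t := by
  have d1 := intervalIntegral.integral_hasDerivAt_right (hf.intervalIntegrable hp ht.le)
    (hf.continuousOn.stronglyMeasurableAtFilter isOpen_Ioi t ht)
    (hf.continuousOn.continuousAt (Ioi_mem_nhds ht))
  have d2 := intervalIntegral.integral_hasDerivAt_right (hg.intervalIntegrable hq ht.le)
    (hg.continuousOn.stronglyMeasurableAtFilter isOpen_Ioi t ht)
    (hg.continuousOn.continuousAt (Ioi_mem_nhds ht))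
  refine d1.unique (d2.congr_of_eventuallyEq ?_)
  filter_upwards [Ioi_mem_nhds ht] with s hs using h s hs

section Generator

variable {α : ℝ} {T : ℝ → X →L[ℝ] X}

theorem continuousOn_remainder (hT : IsRLFracCosine α T) (x : X) :
    ContinuousOn (fun r => T r x - (r ^ (α - 2) / Real.Gamma (α - 1)) • x) (Ioi 0) := by
  refine (hT.1 x).sub (ContinuousOn.smul (ContinuousOn.div_const ?_ _) continuousOn_const)
  intro t ht
  exact (Real.continuousAt_rpow_const _ _ (Or.inl (ne_of_gt ht))).continuousWithinAt

/-- The leading terms at `0` of `T(r)x` and `r^(α-2)/Γ(α-1) x` cancel. -/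
theorem reg_remainder (hT : IsRLFracCosine α T) (x : X) :
    Reg (α - 2) (fun r => T r x - (r ^ (α - 2) / Real.Gamma (α - 1)) • x) 0 := by
  refine Reg.of_tendsto (continuousOn_remainder hT x) ?_
  have h := (hT.2.1 x).sub_const ((Real.Gamma (α - 1))⁻¹ • x)
  rw [sub_self] at h
  refine h.congr' ?_
  filter_upwards [self_mem_nhdsWithin] with t ht
  have ht : 0 < t := ht
  rw [neg_sub, smul_sub, smul_smul, div_eq_mul_inv, ← mul_assoc, ← Real.rpow_add ht]
  simp

variable [CompleteSpace X]

/-- The function `r^(α-2)/Γ(α-1)` has fractional integral of order `2-α` equal to `1`. -/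
theorem RLint_remainder (hα : α ∈ Ioo (1:ℝ) 2) (hT : IsRLFracCosine α T) (x : X) {s : ℝ}
    (hs : 0 < s) :
    RLint (2 - α) s (fun r => T r x - (r ^ (α - 2) / Real.Gamma (α - 1)) • x) =
      JT T (2 - α) s x - x := by
  have hγ : 0 < 2 - α := by linarith [hα.2]
  have hα1 : 0 < α - 1 := by linarith [hα.1]
  have hG := (Real.Gamma_pos_of_pos hγ).ne'
  have hG' := (Real.Gamma_pos_of_pos hα1).ne'
  have hw := weight_intervalIntegrable (a := 2 - α) (b := α - 1) hγ hα1 hs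
  have hv := weight_integral (a := 2 - α) (b := α - 1) hγ hα1 hs
  have e : ∀ r : ℝ, (s - r) ^ (2 - α - 1) • (r ^ (α - 2) / Real.Gamma (α - 1)) • x =
      ((s - r) ^ (2 - α - 1) * (r - 0) ^ (α - 1 - 1)) • (Real.Gamma (α - 1))⁻¹ • x := by
    intro r
    rw [smul_smul, smul_smul, sub_zero, show α - 1 - 1 = α - 2 by ring]
    ring_nf
  simp only [JT, RLint, smul_sub, e]
  rw [intervalIntegral.integral_sub
    ((hT.reg x).intervalIntegrable_weight (by linarith) hγ hs) ⟨hw.1.smul_const _, hw.2.smul_const _⟩,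
    intervalIntegral.integral_smul_const, hv, smul_sub]
  congr 1
  rw [smul_smul, smul_smul, show 2 - α + (α - 1) = 1 by ring, Real.Gamma_one, sub_self,
    Real.rpow_zero]
  convert one_smul ℝ x using 2
  field_simp

/-- `C(t)x - x = R(t) A x`: the symmetric identity multiplied by `Γ(α+1) s^(-α)`, in the limit
`s → 0`. -/
theorem JT_sub_of_genLimit (hα : α ∈ Ioo (1:ℝ) 2) (hT : IsRLFracCosine α T) {x y : X}
    (h : GenLimit α T x y) {t : ℝ} (ht : 0 < t) :
    JT T (2 - α) t x - x = JT T 2 t y := by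
  have hγ : 0 < 2 - α := by linarith [hα.2]
  have hG := (Real.Gamma_pos_of_pos (show 0 < α + 1 by linarith [hα.1])).ne'
  obtain ⟨C, hC⟩ := hT.exists_clm hα hγ ht
  obtain ⟨R, hR⟩ := hT.exists_clm hα two_pos ht
  have h2 := ((hT.reg_JT hα x two_pos).tendsto).const_smul (Real.Gamma (α + 1))
  rw [show α - 1 + 2 = α + 1 by ring, smul_smul, mul_inv_cancel₀ hG, one_smul,
    show α - 2 + 2 = α by ring] at h2
  have l1 := (C.continuous.tendsto x).comp h2
  have l2 := (R.continuous.tendsto y).comp h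
  rw [← hC, ← hR]
  refine tendsto_nhds_unique (l1.sub h2) (l2.congr' ?_)
  filter_upwards [self_mem_nhdsWithin] with s hs
  have hs : 0 < s := hs
  have hid := hT.symm_identity hα ht hs x
  rw [← hC, ← hR, ← hR, ← map_sub] at hid
  simp only [Function.comp]
  rw [RLint_remainder hα hT x hs, map_smul, ← hid, smul_smul, map_smul, smul_sub]

/-- `T(t)x - t^(α-2)/Γ(α-1) x = J^α T(t) A x`. Both sides have the same primitive, as one sees by
applying `J^(α-1)` to `JT_sub_of_genLimit`. -/
theorem remainder_eq_of_genLimit (hα : α ∈ Ioo (1:ℝ) 2) (hT : IsRLFracCosine α T) {x y : X}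
    (h : GenLimit α T x y) {t : ℝ} (ht : 0 < t) :
    T t x - (t ^ (α - 2) / Real.Gamma (α - 1)) • x = JT T α t y := by
  have hα1 := hα.1
  have hα2 := hα.2
  have hp : -1 < α - 2 := by linarith
  refine eq_of_integral_eq (reg_remainder hT x) (hT.reg_JT hα y (β := α) (by linarith)) hp
    (by linarith) (fun s hs => ?_) ht
  rw [hT.integral_JT hα (by linarith) hs, ← RLint_one]
  have h1 := RLint_RLint (reg_remainder hT x) hp (a := α - 1) (b := 2 - α) (by linarith)
    (by linarith) (by linarith) hs
  have h2 := RLint_RLint (hT.reg y) hp (a := α - 1) (b := 2) (by linarith)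
    (by linarith) (by linarith) hs
  rw [show α - 1 + (2 - α) = 1 by ring] at h1
  rw [show α - 1 + 2 = 1 + α by ring] at h2
  rw [← h1, JT, ← h2]
  refine RLint_congr hs fun r hr => ?_
  rw [RLint_remainder hα hT x hr, JT_sub_of_genLimit hα hT h hr, JT]

theorem genLimit_of_tendsto (hα : α ∈ Ioo (1:ℝ) 2) (hT : IsRLFracCosine α T) {x z : X}
    (h : Tendsto (fun t : ℝ =>
        (t ^ (2 * α - 2))⁻¹ • (T t x - (t ^ (α - 2) / Real.Gamma (α - 1)) • x))
      (𝓝[>] (0:ℝ)) (𝓝 z)) :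
    GenLimit α T x (Real.Gamma (2 * α - 1) • z) := by
  have hα1 := hα.1
  have hα2 := hα.2
  have hG := (Real.Gamma_pos_of_pos (show 0 < α + 1 by linarith)).ne'
  have hreg : Reg (2 * α - 2) (fun r => T r x - (r ^ (α - 2) / Real.Gamma (α - 1)) • x) z := by
    refine Reg.of_tendsto (continuousOn_remainder hT x) (h.congr' ?_)
    filter_upwards [self_mem_nhdsWithin] with t ht
    rw [Real.rpow_neg (le_of_lt ht)]
  have h2 := ((hreg.frac (β := 2 - α) (by linarith) (by linarith)).tendsto).const_smul
    (Real.Gamma (α + 1))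
  rw [show 2 * α - 2 + (2 - α) = α by ring, show 2 * α - 2 + 1 = 2 * α - 1 by ring, smul_smul,
    mul_div_cancel₀ _ hG] at h2
  refine h2.congr fun t => ?_
  rw [smul_smul]

theorem tendsto_of_genLimit (hα : α ∈ Ioo (1:ℝ) 2) (hT : IsRLFracCosine α T) {x y : X}
    (h : GenLimit α T x y) :
    Tendsto (fun t : ℝ =>
        (t ^ (2 * α - 2))⁻¹ • (T t x - (t ^ (α - 2) / Real.Gamma (α - 1)) • x))
      (𝓝[>] (0:ℝ)) (𝓝 ((Real.Gamma (2 * α - 1))⁻¹ • y)) := by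
  have hreg := (hT.reg_JT hα y (β := α) (by linarith [hα.1])).tendsto
  rw [show α - 1 + α = 2 * α - 1 by ring, show α - 2 + α = 2 * α - 2 by ring] at hreg
  refine hreg.congr' ?_
  filter_upwards [self_mem_nhdsWithin] with t ht
  rw [Real.rpow_neg (le_of_lt ht), remainder_eq_of_genLimit hα hT h ht]

end Generator

end Helpers

/-- `x ∈ D(A)` iff `lim_{t→0+} (T(t)x − (t^{α-2}/Γ(α-1))x)/t^{2α-2}` exists, and in
that case `Ax = Γ(2α-1)` times this limit. -/
theorem rl_frac_cosine_generator_characterization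
    {X : Type*} [NormedAddCommGroup X] [NormedSpace ℝ X] [CompleteSpace X]
    (α : ℝ) (hα : α ∈ Set.Ioo (1:ℝ) 2) (T : ℝ → X →L[ℝ] X)
    (hT : IsRLFracCosine α T) :
    ∀ x : X,
      ((∃ y, GenLimit α T x y) ↔
        (∃ z, Tendsto (fun t : ℝ =>
            (t ^ (2 * α - 2))⁻¹ • (T t x - (t ^ (α - 2) / Real.Gamma (α - 1)) • x))
          (𝓝[>] (0:ℝ)) (𝓝 z))) ∧
      (∀ y z : X, GenLimit α T x y →
        Tendsto (fun t : ℝ =>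
            (t ^ (2 * α - 2))⁻¹ • (T t x - (t ^ (α - 2) / Real.Gamma (α - 1)) • x))
          (𝓝[>] (0:ℝ)) (𝓝 z) →
        y = Real.Gamma (2 * α - 1) • z) := by
  intro x
  refine ⟨⟨fun ⟨y, hy⟩ => ⟨_, tendsto_of_genLimit hα hT hy⟩,
    fun ⟨z, hz⟩ => ⟨_, genLimit_of_tendsto hα hT hz⟩⟩, fun y z hy hz => ?_⟩
  exact tendsto_nhds_unique hy (genLimit_of_tendsto hα hT hz)
end

section
/- Let α ∈ (1,2) and let X be a real Banach space. A closed densely defined linear operator A admits at most one Riemann-Liouville α-order fractional cosine function: if {T(t)}_{t>0} and {S(t)}_{t>0} are Riemann-Liouville α-order fractional cosine functions on X both having generator A, then T(t) = S(t) for every t > 0. -/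
/-!
Write `Q_T(t) = ∫_0^t (t-σ) T(σ) dσ` (`opQ`), `C_T(t) = ∫_0^t (t-σ)^{1-α} T(σ) dσ` (`opC`) and
`Γ = Γ(2-α)`. These are bounded operators because, by Banach-Steinhaus,
`‖T(σ)‖ = O(σ^{α-2})` near `0` (`IsRLFracCosine.tame`).

Integrating the functional equation over `t' ∈ (0,t)` with `s` fixed, integrating it over
`s' ∈ (0,s)` with `t` fixed, and subtracting, all the terms carrying the primitive
`y^{2-α}/(2-α)` of the kernel cancel, and what is left is (`IsRLFracCosine.key_identity`)

  `Γ (Q_T(t) - Q_T(s)) = Q_T(t) C_T(s) - C_T(t) Q_T(s)`,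

that is, `Q_T(t) (Γ⁻¹ C_T(s) - 1) = (Γ⁻¹ C_T(t) - 1) Q_T(s)`. The operator whose limit defines the
generator is `Γ(α+1) s^{-α} (Γ⁻¹ C_T(s) - 1)`, and `Γ(α+1) s^{-α} Q_T(s) → 1` strongly as `s → 0+`.
Letting one of the two variables tend to `0` gives
* `Q_T(t)x ∈ D(A)` with `A Q_T(t)x = Γ⁻¹ C_T(t)x - x` (`IsRLFracCosine.genLimit_opQ`);
* `Q_T(t) A x = Γ⁻¹ C_T(t)x - x` for `x ∈ D(A)` (`IsRLFracCosine.of_genLimit`).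

If `S` has the same generator, the second fact for `T`, applied to the vector `Q_S(t)x` with the
first fact for `S`, yields the mixed identity (`cross_identity`)

  `Γ (Q_T(r)x - Q_S(t)x) = Q_T(r) C_S(t) x - C_T(r) Q_S(t) x`   for all `r, t > 0`.

Put `r = u - w`, `t = w` and integrate over `w ∈ (0,u)`. After Fubini the two terms on the right
have the kernels `∫_τ^{u-σ} (u-w-σ)(w-τ)^{1-α} dw` and `∫_τ^{u-σ} (u-w-σ)^{1-α}(w-τ) dw`, which agree
by the reflection `w ↦ u-σ+τ-w`, so the right-hand side integrates to `0`. Hence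
`∫_0^u Q_T(w)x dw = ∫_0^u Q_S(w)x dw` for every `u > 0`, and three differentiations give `T = S`.
-/

open MeasureTheory Filter Topology Set

set_option linter.unusedSectionVars false

/-! ### Local bounds and Fubini for kernels -/

/-- `T` is strongly continuous on `(0,∞)` and `‖T σ‖ ≤ M σ^(α-2)` on each interval `(0, a]`. These
are the only consequences of the first two conditions used for integrability. -/
def Tame {X : Type*} [NormedAddCommGroup X] [NormedSpace ℝ X]
    (α : ℝ) (T : ℝ → X →L[ℝ] X) : Prop :=
  (∀ x : X, ContinuousOn (fun t => T t x) (Ioi (0:ℝ))) ∧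
  ∀ a > (0:ℝ), ∃ M : ℝ, 0 ≤ M ∧ ∀ σ ∈ Ioc (0:ℝ) a, ‖T σ‖ ≤ M * σ ^ (α - 2)

/-- The functions `σ ↦ σ^(2-α) T(σ)x` are bounded on `(0, a]`, near `0` by the initial condition and
elsewhere by compactness; the uniform boundedness principle turns this into a norm bound. -/
theorem IsRLFracCosine.tame {X : Type*} [NormedAddCommGroup X] [NormedSpace ℝ X] [CompleteSpace X]
    {α : ℝ} {T : ℝ → X →L[ℝ] X} (hT : IsRLFracCosine α T) : Tame α T := by
  refine ⟨hT.1, fun a ha => ?_⟩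
  obtain ⟨C, hC⟩ := banach_steinhaus (g := fun i : Ioc (0:ℝ) a => (i:ℝ) ^ (2 - α) • T i) (by
    intro x
    have h1 := hT.2.1 x
    have h2 : ∀ᶠ t in 𝓝[>] (0:ℝ), ‖t ^ (2 - α) • T t x‖ < ‖(Real.Gamma (α - 1))⁻¹ • x‖ + 1 :=
      h1.norm.eventually_lt_const (lt_add_one _)
    obtain ⟨δ, hδ, hδ'⟩ := mem_nhdsGT_iff_exists_Ioo_subset.1 h2
    have hδ0 : (0:ℝ) < δ := hδ
    have hc : ContinuousOn (fun t : ℝ => t ^ (2 - α) • T t x) (Icc δ a) := by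
      refine ContinuousOn.smul ?_ ((hT.1 x).mono fun t ht => lt_of_lt_of_le hδ0 ht.1)
      exact continuousOn_id.rpow_const fun t ht => Or.inl (lt_of_lt_of_le hδ0 ht.1).ne'
    obtain ⟨C, hC⟩ := isCompact_Icc.exists_bound_of_continuousOn hc
    refine ⟨max C (‖(Real.Gamma (α - 1))⁻¹ • x‖ + 1), fun i => ?_⟩
    rcases lt_or_ge (i:ℝ) δ with h | h
    · exact le_max_of_le_right (le_of_lt (hδ' ⟨i.2.1, h⟩))
    · exact le_max_of_le_left (hC i ⟨h, i.2.2⟩))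
  refine ⟨max C 0, le_max_right _ _, fun σ hσ => ?_⟩
  have h := hC ⟨σ, hσ⟩
  simp only [norm_smul, Real.norm_eq_abs] at h
  rw [abs_of_nonneg (Real.rpow_nonneg hσ.1.le _)] at h
  have hp : 0 < σ ^ (α - 2) := Real.rpow_pos_of_pos hσ.1 _
  have h1 : σ ^ (α - 2) * σ ^ (2 - α) = 1 := by
    rw [← Real.rpow_add hσ.1]; simp
  calc ‖T σ‖ = σ ^ (α - 2) * (σ ^ (2 - α) * ‖T σ‖) := by rw [← mul_assoc, h1, one_mul]
    _ ≤ σ ^ (α - 2) * max C 0 := by gcongr; exact h.trans (le_max_left _ _)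
    _ = _ := mul_comm _ _

/-- A real kernel with uniformly bounded `L¹` norms in its first variable, times an integrable function
of the second variable, is jointly integrable. -/
theorem integrable_fubini_kernel {X Z : Type*} [NormedAddCommGroup X] [NormedSpace ℝ X]
    [MeasurableSpace Z] {ν : Measure ℝ} [SFinite ν] {μ : Measure Z} [SFinite μ]
    {H : Z → X} (hH : Integrable H μ) {K : ℝ → Z → ℝ}
    (hK : Measurable (Function.uncurry K)) (c : ℝ)
    (hc : ∀ᵐ z ∂μ, Integrable (fun w => K w z) ν ∧ ∫ w, ‖K w z‖ ∂ν ≤ c) :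
    Integrable (fun p : ℝ × Z => K p.1 p.2 • H p.2) (ν.prod μ) := by
  have hm : AEStronglyMeasurable (fun p : ℝ × Z => K p.1 p.2 • H p.2) (ν.prod μ) :=
    (hK.stronglyMeasurable.aestronglyMeasurable).smul hH.1.comp_snd
  rw [integrable_prod_iff' hm]
  constructor
  · filter_upwards [hc] with z hz
    exact hz.1.smul_const _
  · refine (hH.norm.const_mul c).mono' hm.norm.prod_swap.integral_prod_right' ?_
    filter_upwards [hc] with z hz
    simp only [norm_smul]
    rw [integral_mul_const, Real.norm_eq_abs, abs_of_nonneg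
      (mul_nonneg (integral_nonneg fun w => norm_nonneg _) (norm_nonneg _))]
    exact mul_le_mul_of_nonneg_right hz.2 (norm_nonneg _)

theorem fubini_kernel {X Z : Type*} [NormedAddCommGroup X] [NormedSpace ℝ X] [CompleteSpace X]
    [MeasurableSpace Z] {ν : Measure ℝ} [SFinite ν] {μ : Measure Z} [SFinite μ]
    {H : Z → X} (hH : Integrable H μ) {K : ℝ → Z → ℝ}
    (hK : Measurable (Function.uncurry K)) (c : ℝ)
    (hc : ∀ᵐ z ∂μ, Integrable (fun w => K w z) ν ∧ ∫ w, ‖K w z‖ ∂ν ≤ c) :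
    ∫ w, ∫ z, K w z • H z ∂μ ∂ν = ∫ z, (∫ w, K w z ∂ν) • H z ∂μ := by
  rw [integral_integral_swap (integrable_fubini_kernel hH hK c hc)]
  refine integral_congr_ae (Eventually.of_forall fun z => ?_)
  exact integral_smul_const _ _

theorem fubini_kernel₂ {X : Type*} [NormedAddCommGroup X] [NormedSpace ℝ X] [CompleteSpace X]
    {ν μ₁ μ₂ : Measure ℝ} [SFinite ν] [SFinite μ₁] [SFinite μ₂]
    {H : ℝ × ℝ → X} (hH : Integrable H (μ₁.prod μ₂)) {K : ℝ → ℝ × ℝ → ℝ}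
    (hK : Measurable (Function.uncurry K)) (c : ℝ)
    (hc : ∀ᵐ z ∂(μ₁.prod μ₂), Integrable (fun w => K w z) ν ∧ ∫ w, ‖K w z‖ ∂ν ≤ c) :
    Integrable (fun w => ∫ σ, ∫ τ, K w (σ, τ) • H (σ, τ) ∂μ₂ ∂μ₁) ν ∧
    Integrable (fun z => (∫ w, K w z ∂ν) • H z) (μ₁.prod μ₂) ∧
    ∫ w, ∫ σ, ∫ τ, K w (σ, τ) • H (σ, τ) ∂μ₂ ∂μ₁ ∂ν
      = ∫ z, (∫ w, K w z ∂ν) • H z ∂(μ₁.prod μ₂) := by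
  have hi := integrable_fubini_kernel hH hK c hc
  have he : (fun w => ∫ z, K w z • H z ∂(μ₁.prod μ₂)) =ᵐ[ν]
      fun w => ∫ σ, ∫ τ, K w (σ, τ) • H (σ, τ) ∂μ₂ ∂μ₁ := by
    filter_upwards [hi.prod_right_ae] with w hw
    exact integral_prod _ hw
  refine ⟨hi.integral_prod_left.congr he, ?_, ?_⟩
  · refine hi.integral_prod_right.congr (Eventually.of_forall fun z => ?_)
    exact integral_smul_const (μ := ν) (fun w => K w z) (H z)
  rw [← fubini_kernel hH hK c hc]
  exact (integral_congr_ae he).symm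

/-- Rewrites an integral with a variable endpoint over a fixed interval, so that Fubini applies on a
product measure. -/
theorem setIntegral_ite_gt {X : Type*} [NormedAddCommGroup X] [NormedSpace ℝ X]
    (f : ℝ → X) {w t : ℝ} (ha : 0 ≤ w) (hat : w ≤ t) :
    ∫ σ in Ioc 0 t, (if σ < w then f σ else 0) = ∫ σ in 0..w, f σ := by
  rw [intervalIntegral.integral_of_le ha, integral_Ioc_eq_integral_Ioo (x := 0) (y := w),
    ← integral_indicator measurableSet_Ioc, ← integral_indicator measurableSet_Ioo]
  congr 1; ext σ
  by_cases h : σ < w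
  · have : σ ≤ t := h.le.trans hat
    simp [indicator, h, this]
  · simp [indicator, h]

/-- The beta integrand is integrable: on each half of `(0, t]` only one of its two factors is
singular, and the other is bounded by its value at `t/2`. -/
theorem integrableOn_beta {p q : ℝ} (hp : -1 < p) (hp0 : p ≤ 0) (hq : -1 < q) (hq0 : q ≤ 0)
    (t : ℝ) :
    IntegrableOn (fun σ : ℝ => (t - σ) ^ q * σ ^ p) (Ioc 0 t) := by
  rcases le_or_gt t 0 with ht | ht
  · simp [Ioc_eq_empty (not_lt.2 ht)]
  have i1 : IntegrableOn (fun σ : ℝ => σ ^ p) (Ioc 0 t) :=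
    (intervalIntegrable_iff_integrableOn_Ioc_of_le ht.le).1 (intervalIntegral.intervalIntegrable_rpow' hp)
  have i2 : IntegrableOn (fun σ : ℝ => (t - σ) ^ q) (Ioc 0 t) := by
    have := (intervalIntegral.intervalIntegrable_rpow' (a := 0) (b := t) hq).comp_sub_left t
    simp only [sub_zero, sub_self] at this
    exact (intervalIntegrable_iff_integrableOn_Ioc_of_le ht.le).1 this.symm
  rw [integrableOn_Ioc_iff_integrableOn_Ioo] at *
  refine Integrable.mono' ((i1.const_mul ((t/2)^q)).add (i2.const_mul ((t/2)^p))) ?_ ?_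
  · exact (by fun_prop : Measurable fun σ : ℝ => (t - σ) ^ q * σ ^ p).aestronglyMeasurable
  · refine (ae_restrict_mem measurableSet_Ioo).mono fun σ hσ => ?_
    have h1 : 0 < σ := hσ.1
    have h2 : 0 < t - σ := sub_pos.2 hσ.2
    rw [Real.norm_eq_abs, abs_of_nonneg (by positivity)]
    simp only [Pi.add_apply]
    rcases le_total σ (t/2) with h | h
    · have : (t - σ)^q ≤ (t/2)^q := Real.rpow_le_rpow_of_nonpos (by positivity) (by linarith) hq0
      have h3 : 0 ≤ (t/2)^p * (t - σ)^q := by positivity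
      have := mul_le_mul_of_nonneg_right this (Real.rpow_nonneg h1.le p)
      linarith
    · have : σ^p ≤ (t/2)^p := Real.rpow_le_rpow_of_nonpos (by positivity) (by linarith) hp0
      have h3 : 0 ≤ (t/2)^q * σ^p := by positivity
      have := mul_le_mul_of_nonneg_left this (Real.rpow_nonneg h2.le q)
      linarith

/-! ### Weighted integrals of tame families -/

/-- `w` is an admissible weight on `(0, a]`: integrating `w` against a function of size `σ^(α-2)` makes
sense. -/
def Wt (α a : ℝ) (w : ℝ → ℝ) : Prop :=
  Measurable w ∧ IntegrableOn (fun σ => w σ * σ ^ (α - 2)) (Ioc 0 a)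

theorem Wt.of_continuous {α a : ℝ} (hα : α ∈ Ioo (1:ℝ) 2) (ha : 0 ≤ a) {w : ℝ → ℝ}
    (hw : Continuous w) : Wt α a w := by
  refine ⟨hw.measurable, ?_⟩
  rw [← intervalIntegrable_iff_integrableOn_Ioc_of_le ha]
  exact (intervalIntegral.intervalIntegrable_rpow' (by linarith [hα.1])).continuousOn_mul
    hw.continuousOn

theorem Wt.rpow {α a : ℝ} (hα : α ∈ Ioo (1:ℝ) 2) :
    Wt α a (fun σ => (a - σ) ^ (1 - α)) :=
  ⟨by fun_prop, integrableOn_beta (by linarith [hα.1]) (by linarith [hα.2])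
    (by linarith [hα.2]) (by linarith [hα.1]) a⟩

section
variable {X : Type*} [NormedAddCommGroup X] [NormedSpace ℝ X]

theorem Tame.integrable {α a : ℝ} {T : ℝ → X →L[ℝ] X} (hT : Tame α T) {w : ℝ → ℝ}
    (hw : Wt α a w) (x : X) : IntegrableOn (fun σ => w σ • T σ x) (Ioc 0 a) := by
  rcases le_or_gt a 0 with ha | ha
  · simp [Ioc_eq_empty (not_lt.2 ha)]
  obtain ⟨M, hM0, hM⟩ := hT.2 a ha
  refine Integrable.mono' (hw.2.norm.mul_const (M * ‖x‖)) ?_ ?_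
  · exact hw.1.aestronglyMeasurable.smul
      (((hT.1 x).mono Ioc_subset_Ioi_self).aestronglyMeasurable measurableSet_Ioc)
  · refine (ae_restrict_mem measurableSet_Ioc).mono fun σ hσ => ?_
    have hp : 0 < σ ^ (α - 2) := Real.rpow_pos_of_pos hσ.1 _
    rw [norm_smul, norm_mul, Real.norm_eq_abs (σ ^ (α - 2)), abs_of_pos hp, mul_assoc]
    gcongr
    calc ‖T σ x‖ ≤ ‖T σ‖ * ‖x‖ := (T σ).le_opNorm x
      _ ≤ (M * σ ^ (α - 2)) * ‖x‖ := by gcongr; exact hM σ hσ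
      _ = _ := by ring

/-- Weighted integrals of a tame family are bounded operators. -/
theorem Tame.exists_clm {α a : ℝ} (ha : 0 < a) {T : ℝ → X →L[ℝ] X} (hT : Tame α T) {w : ℝ → ℝ}
    (hw : Wt α a w) : ∃ L : X →L[ℝ] X, ∀ x, L x = ∫ σ in (0:ℝ)..a, w σ • T σ x := by
  obtain ⟨M, hM0, hM⟩ := hT.2 a ha
  refine ⟨LinearMap.mkContinuous
    { toFun := fun x => ∫ σ in (0:ℝ)..a, w σ • T σ x
      map_add' := fun x y => ?_
      map_smul' := fun c x => ?_ } (M * ∫ σ in Ioc 0 a, ‖w σ * σ ^ (α - 2)‖) ?_, fun x => rfl⟩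
  · simp only [map_add, smul_add, intervalIntegral.integral_of_le ha.le]
    exact integral_add (hT.integrable hw x) (hT.integrable hw y)
  · simp only [map_smul, RingHom.id_apply, smul_comm _ c]
    exact intervalIntegral.integral_smul _ _
  · intro x
    simp only [LinearMap.coe_mk, AddHom.coe_mk, intervalIntegral.integral_of_le ha.le]
    have : M * (∫ σ in Ioc 0 a, ‖w σ * σ ^ (α - 2)‖) * ‖x‖
        = ∫ σ in Ioc 0 a, ‖w σ * σ ^ (α - 2)‖ * (M * ‖x‖) := by
      rw [integral_mul_const]; ring
    rw [this]
    refine norm_integral_le_of_norm_le (hw.2.norm.mul_const (M * ‖x‖)) ?_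
    refine (ae_restrict_mem measurableSet_Ioc).mono fun σ hσ => ?_
    have hp : 0 < σ ^ (α - 2) := Real.rpow_pos_of_pos hσ.1 _
    rw [norm_smul, norm_mul, Real.norm_eq_abs (σ ^ (α - 2)), abs_of_pos hp, mul_assoc]
    gcongr
    calc ‖T σ x‖ ≤ ‖T σ‖ * ‖x‖ := (T σ).le_opNorm x
      _ ≤ (M * σ ^ (α - 2)) * ‖x‖ := by gcongr; exact hM σ hσ
      _ = _ := by ring

/-- Joint continuity follows from strong continuity and the local norm bound on `T`. -/
theorem Tame.continuousOn_comp {α : ℝ} {T S : ℝ → X →L[ℝ] X} (hT : Tame α T) (hS : Tame α S)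
    (x : X) : ContinuousOn (fun z : ℝ × ℝ => T z.1 (S z.2 x)) (Ioi 0 ×ˢ Ioi 0) := by
  rintro ⟨σ, τ⟩ ⟨hσ, hτ⟩
  simp only [mem_Ioi] at hσ hτ
  obtain ⟨M, hM0, hM⟩ := hT.2 (2 * σ) (by positivity)
  have hc1 : ContinuousAt (fun z : ℝ × ℝ => T z.1 (S τ x)) (σ, τ) :=
    ContinuousAt.comp (f := Prod.fst) (g := fun r => T r (S τ x))
      ((hT.1 (S τ x)).continuousAt (Ioi_mem_nhds hσ)) continuousAt_fst
  have hc2 : ContinuousAt (fun z : ℝ × ℝ => S z.2 x) (σ, τ) :=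
    ContinuousAt.comp (f := Prod.snd) (g := fun r => S r x)
      ((hS.1 x).continuousAt (Ioi_mem_nhds hτ)) continuousAt_snd
  refine ContinuousAt.continuousWithinAt ?_
  have hz : Tendsto (fun z : ℝ × ℝ => T z.1 (S z.2 x - S τ x)) (𝓝 (σ, τ)) (𝓝 0) := by
    have hb : Tendsto (fun z : ℝ × ℝ => M * z.1 ^ (α - 2) * ‖S z.2 x - S τ x‖) (𝓝 (σ, τ)) (𝓝 0) := by
      have h1 : Tendsto (fun z : ℝ × ℝ => z.1 ^ (α - 2)) (𝓝 (σ, τ)) (𝓝 (σ ^ (α - 2))) :=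
        (continuousAt_fst (p := (σ, τ))).rpow_const (Or.inl hσ.ne')
      have h2 : Tendsto (fun z : ℝ × ℝ => ‖S z.2 x - S τ x‖) (𝓝 (σ, τ)) (𝓝 0) := by
        have := (hc2.sub (continuousAt_const (y := S τ x))).norm
        simpa [ContinuousAt] using this
      simpa using (h1.const_mul M).mul h2
    refine squeeze_zero_norm' ?_ hb
    have hev : ∀ᶠ z : ℝ × ℝ in 𝓝 (σ, τ), z.1 ∈ Ioc 0 (2 * σ) :=
      (continuousAt_fst (p := (σ, τ))).eventually
        (Ioc_mem_nhds hσ (by linarith))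
    filter_upwards [hev] with z hz
    exact ((T z.1).le_opNorm _).trans (by gcongr; exact hM _ hz)
  have := hz.add hc1
  simp only [map_sub, sub_add_cancel, zero_add] at this
  exact this

theorem Tame.integrable_prod {α a b : ℝ} (ha : 0 < a) (hb : 0 < b)
    {T S : ℝ → X →L[ℝ] X} (hT : Tame α T) (hS : Tame α S)
    {v w : ℝ → ℝ} (hv : Wt α a v) (hw : Wt α b w) (x : X) :
    Integrable (fun z : ℝ × ℝ => (v z.1 * w z.2) • T z.1 (S z.2 x))
      ((volume.restrict (Ioc 0 a)).prod (volume.restrict (Ioc 0 b))) := by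
  obtain ⟨M, hM0, hM⟩ := hT.2 a ha
  obtain ⟨N, hN0, hN⟩ := hS.2 b hb
  have hm : ∀ᵐ z : ℝ × ℝ ∂((volume.restrict (Ioc 0 a)).prod (volume.restrict (Ioc 0 b))),
      z ∈ Ioc 0 a ×ˢ Ioc 0 b := by
    rw [Measure.prod_restrict]
    exact ae_restrict_mem (measurableSet_Ioc.prod measurableSet_Ioc)
  refine Integrable.mono' ((hv.2.norm.mul_prod hw.2.norm).mul_const (M * N * ‖x‖)) ?_ ?_
  · refine AEStronglyMeasurable.smul ?_ ?_
    · exact ((hv.1.comp measurable_fst).mul (hw.1.comp measurable_snd)).aestronglyMeasurable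
    · rw [Measure.prod_restrict]
      exact ((hT.continuousOn_comp hS x).mono
        (prod_mono Ioc_subset_Ioi_self Ioc_subset_Ioi_self)).aestronglyMeasurable
        (measurableSet_Ioc.prod measurableSet_Ioc)
  · filter_upwards [hm] with z hz
    have hp : 0 < z.1 ^ (α - 2) := Real.rpow_pos_of_pos hz.1.1 _
    have hq : 0 < z.2 ^ (α - 2) := Real.rpow_pos_of_pos hz.2.1 _
    have : ‖T z.1 (S z.2 x)‖ ≤ (M * z.1 ^ (α - 2)) * ((N * z.2 ^ (α - 2)) * ‖x‖) := by
      refine ((T z.1).le_opNorm _).trans ?_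
      have h2 := ((S z.2).le_opNorm x)
      have h3 := hM _ hz.1
      have h4 := hN _ hz.2
      exact mul_le_mul h3 (h2.trans (by gcongr)) (norm_nonneg _) (by positivity)
    rw [norm_smul, norm_mul, norm_mul, norm_mul, Real.norm_eq_abs (z.1 ^ _), abs_of_pos hp,
      Real.norm_eq_abs (z.2 ^ _), abs_of_pos hq]
    calc ‖v z.1‖ * ‖w z.2‖ * ‖T z.1 (S z.2 x)‖ ≤ ‖v z.1‖ * ‖w z.2‖ *
        ((M * z.1 ^ (α - 2)) * ((N * z.2 ^ (α - 2)) * ‖x‖)) := by gcongr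
      _ = _ := by ring

theorem Tame.integral_prod_eq [CompleteSpace X] {α a b : ℝ} (ha : 0 < a) (hb : 0 < b)
    {T S : ℝ → X →L[ℝ] X} (hT : Tame α T) (hS : Tame α S)
    {v w : ℝ → ℝ} (hv : Wt α a v) (hw : Wt α b w) (x : X) :
    ∫ z, (v z.1 * w z.2) • T z.1 (S z.2 x)
      ∂((volume.restrict (Ioc 0 a)).prod (volume.restrict (Ioc 0 b)))
    = ∫ σ in (0:ℝ)..a, v σ • T σ (∫ τ in (0:ℝ)..b, w τ • S τ x) := by
  rw [integral_prod _ (hT.integrable_prod ha hb hS hv hw x),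
    intervalIntegral.integral_of_le ha.le]
  refine integral_congr_ae (Eventually.of_forall fun σ => ?_)
  simp only [mul_smul]
  rw [integral_smul, intervalIntegral.integral_of_le hb.le,
    ← ContinuousLinearMap.integral_comp_comm _ (hS.integrable hw x)]
  simp
end

/-! ### Fubini with variable limits; the operators `Q` and `C` -/

section
variable {X : Type*} [NormedAddCommGroup X] [NormedSpace ℝ X] [CompleteSpace X]

theorem ae_mem_Ioo_prod (t s : ℝ) :
    ∀ᵐ z : ℝ × ℝ ∂((volume.restrict (Ioc 0 t)).prod (volume.restrict (Ioc 0 s))),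
      z ∈ Ioo 0 t ×ˢ Ioo 0 s := by
  rw [← Measure.restrict_congr_set Ioo_ae_eq_Ioc, ← Measure.restrict_congr_set Ioo_ae_eq_Ioc,
    Measure.prod_restrict]
  exact ae_restrict_mem (measurableSet_Ioo.prod measurableSet_Ioo)

/-- Fubini for a triple integral whose inner limits `f w`, `g w` depend on the outer variable `w`. For
fixed `z = (σ, τ)` the admissible `w` fill the interval `(A z, B z)`. -/
theorem fubini_pass {r t s : ℝ} (hr : 0 ≤ r) {H : ℝ × ℝ → X}
    (hH : Integrable H ((volume.restrict (Ioc 0 t)).prod (volume.restrict (Ioc 0 s))))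
    {k : ℝ → ℝ × ℝ → ℝ} (hk : Measurable (Function.uncurry k))
    {f g : ℝ → ℝ} (hf : Measurable f) (hg : Measurable g)
    (hft : ∀ w ∈ Ioo 0 r, f w ∈ Icc 0 t) (hgs : ∀ w ∈ Ioo 0 r, g w ∈ Icc 0 s)
    {A B : ℝ × ℝ → ℝ}
    (hAB : ∀ z ∈ Ioo 0 t ×ˢ Ioo 0 s, 0 ≤ A z ∧ A z ≤ B z ∧ B z ≤ r)
    (hiff : ∀ z ∈ Ioo 0 t ×ˢ Ioo 0 s, ∀ w ∈ Ioo 0 r,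
      (z.1 < f w ∧ z.2 < g w ↔ A z < w ∧ w < B z))
    (hki : ∀ z ∈ Ioo 0 t ×ˢ Ioo 0 s, IntervalIntegrable (fun w => k w z) volume (A z) (B z))
    (hk0 : ∀ z ∈ Ioo 0 t ×ˢ Ioo 0 s, ∀ w ∈ Ioo (A z) (B z), 0 ≤ k w z) {c : ℝ}
    (hkc : ∀ z ∈ Ioo 0 t ×ˢ Ioo 0 s, ∫ w in (A z)..(B z), k w z ≤ c) :
    IntervalIntegrable (fun w => ∫ σ in (0:ℝ)..(f w), ∫ τ in (0:ℝ)..(g w), k w (σ, τ) • H (σ, τ))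
      volume 0 r ∧
    Integrable (fun z => (∫ w in (A z)..(B z), k w z) • H z)
      ((volume.restrict (Ioc 0 t)).prod (volume.restrict (Ioc 0 s))) ∧
    ∫ w in (0:ℝ)..r, ∫ σ in (0:ℝ)..(f w), ∫ τ in (0:ℝ)..(g w), k w (σ, τ) • H (σ, τ)
      = ∫ z, (∫ w in (A z)..(B z), k w z) • H z
        ∂((volume.restrict (Ioc 0 t)).prod (volume.restrict (Ioc 0 s))) := by
  classical
  set ν := (volume.restrict (Ioo 0 r) : Measure ℝ) with hν
  let K : ℝ → ℝ × ℝ → ℝ := fun w z => if z.1 < f w ∧ z.2 < g w then k w z else 0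
  have hKm : Measurable (Function.uncurry K) := by
    refine Measurable.ite ?_ hk measurable_const
    exact (measurableSet_lt (measurable_fst.comp measurable_snd) (hf.comp measurable_fst)).inter
      (measurableSet_lt (measurable_snd.comp measurable_snd) (hg.comp measurable_fst))
  have hKind : ∀ z ∈ Ioo 0 t ×ˢ Ioo 0 s, (fun w => K w z) =ᵐ[ν]
      (Ioo (A z) (B z)).indicator (fun w => k w z) := by
    intro z hz
    refine (ae_restrict_mem measurableSet_Ioo).mono fun w hw => ?_
    simp only [K, indicator, mem_Ioo, hiff z hz w hw]
  have hsub : ∀ z ∈ Ioo 0 t ×ˢ Ioo 0 s, Ioo (A z) (B z) ⊆ Ioo 0 r := fun z hz =>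
    Ioo_subset_Ioo (hAB z hz).1 (hAB z hz).2.2
  have hrestr : ∀ z ∈ Ioo 0 t ×ˢ Ioo 0 s,
      ν.restrict (Ioo (A z) (B z)) = volume.restrict (Ioo (A z) (B z)) := fun z hz => by
    rw [hν, Measure.restrict_restrict measurableSet_Ioo, inter_eq_left.2 (hsub z hz)]
  have hKint : ∀ z ∈ Ioo 0 t ×ˢ Ioo 0 s, ∫ w, K w z ∂ν = ∫ w in (A z)..(B z), k w z := by
    intro z hz
    rw [integral_congr_ae (hKind z hz), integral_indicator measurableSet_Ioo, hrestr z hz,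
      intervalIntegral.integral_of_le (hAB z hz).2.1, integral_Ioc_eq_integral_Ioo]
  have hc : ∀ᵐ z ∂((volume.restrict (Ioc 0 t)).prod (volume.restrict (Ioc 0 s))),
      Integrable (fun w => K w z) ν ∧ ∫ w, ‖K w z‖ ∂ν ≤ c := by
    filter_upwards [ae_mem_Ioo_prod t s] with z hz
    constructor
    · refine Integrable.congr ?_ (hKind z hz).symm
      rw [integrable_indicator_iff measurableSet_Ioo, IntegrableOn, hrestr z hz]
      exact ((intervalIntegrable_iff_integrableOn_Ioo_of_le (hAB z hz).2.1).1 (hki z hz))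
    · have : (fun w => ‖K w z‖) =ᵐ[ν] fun w => K w z := by
        refine (ae_restrict_mem measurableSet_Ioo).mono fun w hw => ?_
        simp only [K]
        split_ifs with h
        · exact Real.norm_of_nonneg (hk0 z hz w ((hiff z hz w hw).1 h))
        · simp
      rw [integral_congr_ae this, hKint z hz]
      exact hkc z hz
  have hsm : (fun z => (∫ w, K w z ∂ν) • H z)
      =ᵐ[(volume.restrict (Ioc 0 t)).prod (volume.restrict (Ioc 0 s))]
      fun z => (∫ w in (A z)..(B z), k w z) • H z := by
    filter_upwards [ae_mem_Ioo_prod t s] with z hz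
    rw [hKint z hz]
  have hin : (fun w => ∫ σ in Ioc 0 t, ∫ τ in Ioc 0 s, K w (σ, τ) • H (σ, τ)) =ᵐ[ν]
      fun w => ∫ σ in (0:ℝ)..(f w), ∫ τ in (0:ℝ)..(g w), k w (σ, τ) • H (σ, τ) := by
    refine (ae_restrict_mem measurableSet_Ioo).mono fun w hw => ?_
    simp only
    rw [← setIntegral_ite_gt _ (hft w hw).1 (hft w hw).2]
    refine integral_congr_ae (Eventually.of_forall fun σ => ?_)
    simp only
    by_cases h : σ < f w
    · rw [if_pos h, ← setIntegral_ite_gt _ (hgs w hw).1 (hgs w hw).2]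
      refine integral_congr_ae (Eventually.of_forall fun τ => ?_)
      simp only [K, h, true_and]
      split_ifs <;> simp
    · simp [K, h]
  obtain ⟨h1, h2, h3⟩ := fubini_kernel₂ hH hKm c hc
  refine ⟨?_, h2.congr hsm, ?_⟩
  · rw [intervalIntegrable_iff_integrableOn_Ioo_of_le hr]
    exact h1.congr hin
  · rw [intervalIntegral.integral_of_le hr, integral_Ioc_eq_integral_Ioo,
      ← integral_congr_ae hin, ← integral_congr_ae hsm]
    exact h3

/-- `Q(t)x = ∫_0^t (t-σ) T(σ)x dσ`. -/
noncomputable def opQ (T : ℝ → X →L[ℝ] X) (t : ℝ) (x : X) : X :=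
  ∫ σ in (0:ℝ)..t, (t - σ) • T σ x

/-- `C(t)x = ∫_0^t (t-σ)^{1-α} T(σ)x dσ`, which is `Γ(2-α)` times the fractional integral of order
`2-α` of `T(·)x`. -/
noncomputable def opC (α : ℝ) (T : ℝ → X →L[ℝ] X) (t : ℝ) (x : X) : X :=
  ∫ σ in (0:ℝ)..t, (t - σ) ^ (1 - α) • T σ x

theorem Tame.intervalIntegrable {α a : ℝ} (hα : α ∈ Ioo (1:ℝ) 2) {T : ℝ → X →L[ℝ] X}
    (hT : Tame α T) (x : X) (ha : 0 ≤ a) : IntervalIntegrable (fun σ => T σ x) volume 0 a := by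
  rw [intervalIntegrable_iff_integrableOn_Ioc_of_le ha]
  simpa using hT.integrable (Wt.of_continuous hα ha (continuous_const (y := (1:ℝ)))) x

/-- `Q(·)x` is the second primitive of `T(·)x`. -/
theorem Tame.integral_primitive {α t : ℝ} (hα : α ∈ Ioo (1:ℝ) 2) {T : ℝ → X →L[ℝ] X}
    (hT : Tame α T) (x : X) (ht : 0 ≤ t) :
    ∫ w in (0:ℝ)..t, ∫ σ in (0:ℝ)..w, T σ x = opQ T t x := by
  have hH : Integrable (fun σ => T σ x) (volume.restrict (Ioc 0 t)) :=
    (intervalIntegrable_iff_integrableOn_Ioc_of_le ht).1 (hT.intervalIntegrable hα x ht)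
  have key := fubini_kernel (ν := volume.restrict (Ioc 0 t)) hH
    (K := fun w σ => if σ < w then (1:ℝ) else 0)
    (Measurable.ite (measurableSet_lt measurable_snd measurable_fst) measurable_const
      measurable_const) t ?_
  · rw [opQ, intervalIntegral.integral_of_le ht, intervalIntegral.integral_of_le ht]
    refine Eq.trans ?_ (key.trans ?_)
    · refine setIntegral_congr_fun measurableSet_Ioc fun w hw => ?_
      rw [← setIntegral_ite_gt _ hw.1.le hw.2]
      refine integral_congr_ae (Eventually.of_forall fun σ => ?_)
      simp
    · refine setIntegral_congr_fun measurableSet_Ioc fun σ hσ => ?_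
      congr 1
      have : (fun w => if σ < w then (1:ℝ) else 0) = (Ioi σ).indicator 1 := by
        ext w; simp [indicator]
      rw [this, integral_indicator_one measurableSet_Ioi, measureReal_restrict_apply measurableSet_Ioi]
      have : Ioi σ ∩ Ioc 0 t = Ioc σ t := by
        ext w; simp only [mem_inter_iff, mem_Ioi, mem_Ioc]
        exact ⟨fun h => ⟨h.1, h.2.2⟩, fun h => ⟨h.1, hσ.1.trans h.1, h.2⟩⟩
      rw [this, Real.volume_real_Ioc_of_le hσ.2]
  · refine Eventually.of_forall fun σ => ?_
    have h1 : ∀ w, ‖(if σ < w then (1:ℝ) else 0)‖ ≤ 1 := fun w => by split_ifs <;> simp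
    have hm : Measurable (fun w => if σ < w then (1:ℝ) else 0) :=
      Measurable.ite measurableSet_Ioi measurable_const measurable_const
    have hi : Integrable (fun w => if σ < w then (1:ℝ) else 0) (volume.restrict (Ioc 0 t)) :=
      (integrable_const (1:ℝ)).mono' hm.aestronglyMeasurable (Eventually.of_forall h1)
    refine ⟨hi, (integral_mono hi.norm (integrable_const (1:ℝ)) h1).trans ?_⟩
    simp [ht]

end

/-! ### The key identity -/

section
variable {X : Type*} [NormedAddCommGroup X] [NormedSpace ℝ X] [CompleteSpace X]

theorem intervalIntegrable_shift_rpow {q : ℝ} (hq : -1 < q) (a b d : ℝ) :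
    IntervalIntegrable (fun w : ℝ => (w - d) ^ q) volume a b := by
  have := (intervalIntegral.intervalIntegrable_rpow' (a := a - d) (b := b - d) hq).comp_sub_right d
  simpa using this

theorem integral_shift_rpow {q : ℝ} (hq : -1 < q) (a b d : ℝ) :
    ∫ w in a..b, (w - d) ^ q = ((b - d) ^ (q + 1) - (a - d) ^ (q + 1)) / (q + 1) := by
  rw [intervalIntegral.integral_comp_sub_right (fun x => x ^ q), integral_rpow (Or.inl hq)]

/-- The functional equation integrated over its first variable, minus the same equation integrated
over its second variable. -/
theorem IsRLFracCosine.key_identity {α : ℝ} (hα : α ∈ Ioo (1:ℝ) 2) {T : ℝ → X →L[ℝ] X}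
    (hT : IsRLFracCosine α T) (x : X) {t s : ℝ} (ht : 0 < t) (hs : 0 < s) :
    Real.Gamma (2 - α) • (opQ T t x - opQ T s x)
      = opQ T t (opC α T s x) - opC α T t (opQ T s x) := by
  have hT' := hT.tame
  have hα1 := hα.1
  have hα2 := hα.2
  have hq : -1 < 1 - α := by linarith
  have hq1 : 1 - α + 1 = 2 - α := by ring
  have hβ : 0 < 2 - α := by linarith
  set G : ℝ → ℝ := fun y => y ^ (2 - α) / (2 - α) with hG
  have hG0 : G 0 = 0 := by simp [hG, hβ.ne']
  have hGm : ∀ y z : ℝ, 0 ≤ y → y ≤ z → G y ≤ G z := fun y z hy hyz => by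
    simp only [hG]; gcongr
  have hGn : ∀ y, 0 ≤ y → 0 ≤ G y := fun y hy => by simp only [hG]; positivity
  have hGint : ∀ a b d : ℝ, ∫ w in a..b, (w - d) ^ (1 - α) = G (b - d) - G (a - d) := by
    intro a b d
    rw [integral_shift_rpow hq, hq1, sub_div]
  have w1 : ∀ {a : ℝ}, 0 < a → Wt α a (fun _ => 1) := fun ha =>
    Wt.of_continuous hα ha.le continuous_const
  have wl : ∀ {a : ℝ}, 0 < a → Wt α a (fun σ => a - σ) := fun ha =>
    Wt.of_continuous hα ha.le (by fun_prop)
  have wr : ∀ {a : ℝ}, Wt α a (fun σ => (a - σ) ^ (1 - α)) := Wt.rpow hα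
  -- Base functions for Fubini: unweighted, and with the singular weight in one of the variables.
  have i0 := hT'.integrable_prod ht hs hT' (w1 ht) (w1 hs) x
  have i1 := hT'.integrable_prod ht hs hT' (wr (a := t)) (w1 hs) x
  have i2 := hT'.integrable_prod ht hs hT' (w1 ht) (wr (a := s)) x
  simp only [one_mul, mul_one, one_smul] at i0 i1 i2
  have cs : ∀ w ∈ Ioo 0 t, s ∈ Icc 0 s := fun _ _ => ⟨hs.le, le_rfl⟩
  have ct : ∀ w ∈ Ioo 0 s, t ∈ Icc 0 t := fun _ _ => ⟨ht.le, le_rfl⟩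
  have cit : ∀ w ∈ Ioo 0 t, w ∈ Icc 0 t := fun _ h => ⟨h.1.le, h.2.le⟩
  have cis : ∀ w ∈ Ioo 0 s, w ∈ Icc 0 s := fun _ h => ⟨h.1.le, h.2.le⟩
  have AB1 : ∀ z ∈ Ioo 0 t ×ˢ Ioo 0 s, 0 ≤ z.1 ∧ z.1 ≤ t ∧ t ≤ t := fun z hz =>
    ⟨hz.1.1.le, hz.1.2.le, le_rfl⟩
  have AB2 : ∀ z ∈ Ioo 0 t ×ˢ Ioo 0 s, 0 ≤ z.2 ∧ z.2 ≤ s ∧ s ≤ s := fun z hz =>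
    ⟨hz.2.1.le, hz.2.2.le, le_rfl⟩
  have if1 : ∀ z ∈ Ioo 0 t ×ˢ Ioo 0 s, ∀ w ∈ Ioo 0 t,
      (z.1 < w ∧ z.2 < s ↔ z.1 < w ∧ w < t) := fun z hz w hw => by
    simp [hz.2.2, hw.2]
  have if2 : ∀ z ∈ Ioo 0 t ×ˢ Ioo 0 s, ∀ w ∈ Ioo 0 s,
      (z.1 < t ∧ z.2 < w ↔ z.2 < w ∧ w < s) := fun z hz w hw => by
    simp [hz.1.2, hw.2]
  have key1 : ∀ (y d : ℝ), 0 ≤ y - d → 0 ≤ y → ∀ b, y ≤ b → 0 ≤ d → G (b - d) - G (y - d) ≤ G b := by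
    intro y d h1 h2 b h3 h4
    have := hGn _ h1
    have := hGm (b - d) b (by linarith) (by linarith)
    linarith
  -- The three right-hand terms of the functional equation, integrated in the first variable.
  obtain ⟨a11, b11, c11⟩ := fubini_pass ht.le i0 (k := fun w z => (w - z.1) ^ (1 - α))
    (by fun_prop) measurable_id measurable_const cit cs AB1 if1
    (fun z hz => intervalIntegrable_shift_rpow hq _ _ _)
    (fun z hz w hw => Real.rpow_nonneg (sub_nonneg.2 hw.1.le) _) (c := G t)
    (fun z hz => by
      rw [hGint]; exact key1 _ _ (by simp) hz.1.1.le _ hz.1.2.le hz.1.1.le)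
  obtain ⟨a12, b12, c12⟩ := fubini_pass ht.le i2 (k := fun w z => 1)
    (by fun_prop) measurable_id measurable_const cit cs AB1 if1
    (fun z hz => intervalIntegrable_const)
    (fun z hz w hw => zero_le_one) (c := t)
    (fun z hz => by simpa using hz.1.1.le)
  obtain ⟨a13, b13, c13⟩ := fubini_pass ht.le i0 (k := fun w z => (w - (z.1 + z.2 - s)) ^ (1 - α))
    (by fun_prop) measurable_id measurable_const cit cs AB1 if1
    (fun z hz => intervalIntegrable_shift_rpow hq _ _ _)
    (fun z hz w hw => Real.rpow_nonneg (by linarith [hz.2.2, hw.1]) _) (c := G (t + s))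
    (fun z hz => by
      rw [hGint]
      have h1 := hGn (z.1 - (z.1 + z.2 - s)) (by linarith [hz.2.2])
      have h2 := hGm (t - (z.1 + z.2 - s)) (t + s) (by linarith [hz.2.2, hz.1.2])
        (by linarith [hz.1.1, hz.2.1])
      linarith)
  -- The same three terms, integrated in the second variable.
  obtain ⟨a21, b21, c21⟩ := fubini_pass hs.le i1 (k := fun w z => 1)
    (by fun_prop) measurable_const measurable_id ct cis AB2 if2
    (fun z hz => intervalIntegrable_const)
    (fun z hz w hw => zero_le_one) (c := s)
    (fun z hz => by simpa using hz.2.1.le)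
  obtain ⟨a22, b22, c22⟩ := fubini_pass hs.le i0 (k := fun w z => (w - z.2) ^ (1 - α))
    (by fun_prop) measurable_const measurable_id ct cis AB2 if2
    (fun z hz => intervalIntegrable_shift_rpow hq _ _ _)
    (fun z hz w hw => Real.rpow_nonneg (sub_nonneg.2 hw.1.le) _) (c := G s)
    (fun z hz => by
      rw [hGint]; exact key1 _ _ (by simp) hz.2.1.le _ hz.2.2.le hz.2.1.le)
  obtain ⟨a23, b23, c23⟩ := fubini_pass hs.le i0 (k := fun w z => (w - (z.1 + z.2 - t)) ^ (1 - α))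
    (by fun_prop) measurable_const measurable_id ct cis AB2 if2
    (fun z hz => intervalIntegrable_shift_rpow hq _ _ _)
    (fun z hz w hw => Real.rpow_nonneg (by linarith [hz.1.2, hw.1]) _) (c := G (t + s))
    (fun z hz => by
      rw [hGint]
      have h1 := hGn (z.2 - (z.1 + z.2 - t)) (by linarith [hz.1.2])
      have h2 := hGm (s - (z.1 + z.2 - t)) (t + s) (by linarith [hz.2.2, hz.1.2])
        (by linarith [hz.1.1, hz.2.1])
      linarith)
  simp only [hGint, intervalIntegral.integral_const, smul_eq_mul, mul_one, one_smul, sub_self, hG0,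
    sub_zero, id] at *
  have e1 : Real.Gamma (2 - α) • (∫ w in (0:ℝ)..t, ∫ σ in (0:ℝ)..(w + s), T σ x) =
      ∫ w in (0:ℝ)..t,
        ((∫ σ in (0:ℝ)..w, ∫ τ in (0:ℝ)..s, (w - σ) ^ (1 - α) • T σ (T τ x)) +
        (∫ σ in (0:ℝ)..w, ∫ τ in (0:ℝ)..s, (s - τ) ^ (1 - α) • T σ (T τ x)) -
        ∫ σ in (0:ℝ)..w, ∫ τ in (0:ℝ)..s, (w - (σ + τ - s)) ^ (1 - α) • T σ (T τ x)) := by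
    rw [← intervalIntegral.integral_smul]
    refine intervalIntegral.integral_congr_ae (Eventually.of_forall fun w hw => ?_)
    rw [uIoc_of_le ht.le] at hw
    rw [hT.2.2 x w hw.1 s hs]
    congr 1
    refine intervalIntegral.integral_congr fun σ _ => intervalIntegral.integral_congr fun τ _ => ?_
    congr 2; ring
  have e2 : Real.Gamma (2 - α) • (∫ w in (0:ℝ)..s, ∫ σ in (0:ℝ)..(t + w), T σ x) =
      ∫ w in (0:ℝ)..s,
        ((∫ σ in (0:ℝ)..t, ∫ τ in (0:ℝ)..w, (t - σ) ^ (1 - α) • T σ (T τ x)) +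
        (∫ σ in (0:ℝ)..t, ∫ τ in (0:ℝ)..w, (w - τ) ^ (1 - α) • T σ (T τ x)) -
        ∫ σ in (0:ℝ)..t, ∫ τ in (0:ℝ)..w, (w - (σ + τ - t)) ^ (1 - α) • T σ (T τ x)) := by
    rw [← intervalIntegral.integral_smul]
    refine intervalIntegral.integral_congr_ae (Eventually.of_forall fun w hw => ?_)
    rw [uIoc_of_le hs.le] at hw
    rw [hT.2.2 x t ht w hw.1]
    congr 1
    refine intervalIntegral.integral_congr fun σ _ => intervalIntegral.integral_congr fun τ _ => ?_
    congr 2; ring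
  rw [intervalIntegral.integral_sub (a11.add a12) a13, intervalIntegral.integral_add a11 a12,
    c11, c12, c13] at e1
  rw [intervalIntegral.integral_sub (a21.add a22) a23, intervalIntegral.integral_add a21 a22,
    c21, c22, c23] at e2
  -- All terms with the primitive `G` of the kernel cancel between the two integrated equations.
  have hcanc := integral_sub (b11.sub b22) (b13.sub b23)
  simp only [Pi.sub_apply] at hcanc
  rw [integral_sub b11 b22, integral_sub b13 b23] at hcanc
  have hzero : ∀ z : ℝ × ℝ, (G (t - z.1) • T z.1 (T z.2 x) - G (s - z.2) • T z.1 (T z.2 x)) -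
      ((G (t - (z.1 + z.2 - s)) - G (z.1 - (z.1 + z.2 - s))) • T z.1 (T z.2 x) -
       (G (s - (z.1 + z.2 - t)) - G (z.2 - (z.1 + z.2 - t))) • T z.1 (T z.2 x)) = 0 := by
    intro z
    have h1 : t - (z.1 + z.2 - s) = s - (z.1 + z.2 - t) := by ring
    have h2 : z.1 - (z.1 + z.2 - s) = s - z.2 := by ring
    have h3 : z.2 - (z.1 + z.2 - t) = t - z.1 := by ring
    rw [h1, h2, h3]; module
  simp only [hzero, integral_zero] at hcanc
  -- On the left, both integrals are integrals of the primitive of `T(·)x` up to `t + s`, starting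
  -- from `s` and from `t`; their difference is the increment of the second primitive.
  have hPc : ∀ a b, 0 ≤ a → 0 ≤ b →
      IntervalIntegrable (fun w => ∫ σ in (0:ℝ)..w, T σ x) volume a b := by
    intro a b ha hb
    have hi := hT'.intervalIntegrable hα x (ha.trans (le_max_left a b))
    have := intervalIntegral.continuousOn_primitive_interval' hi left_mem_uIcc
    rw [uIcc_of_le (ha.trans (le_max_left a b))] at this
    refine (this.mono fun y hy => ?_).intervalIntegrable
    exact ⟨(le_min ha hb).trans hy.1, hy.2⟩
  have l1 : ∫ w in (0:ℝ)..t, ∫ σ in (0:ℝ)..(w + s), T σ x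
      = ∫ w in s..(t + s), ∫ σ in (0:ℝ)..w, T σ x := by
    rw [intervalIntegral.integral_comp_add_right (fun w => ∫ σ in (0:ℝ)..w, T σ x), zero_add]
  have l2 : ∫ w in (0:ℝ)..s, ∫ σ in (0:ℝ)..(t + w), T σ x
      = ∫ w in t..(t + s), ∫ σ in (0:ℝ)..w, T σ x := by
    rw [intervalIntegral.integral_comp_add_left (fun w => ∫ σ in (0:ℝ)..w, T σ x), add_zero]
  have l3 : opQ T t x - opQ T s x = (∫ w in s..(t + s), ∫ σ in (0:ℝ)..w, T σ x)
      - ∫ w in t..(t + s), ∫ σ in (0:ℝ)..w, T σ x := by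
    have h1 := intervalIntegral.integral_add_adjacent_intervals (hPc 0 s le_rfl hs.le)
      (hPc s (t + s) hs.le (by positivity))
    have h2 := intervalIntegral.integral_add_adjacent_intervals (hPc 0 t le_rfl ht.le)
      (hPc t (t + s) ht.le (by positivity))
    rw [← hT'.integral_primitive hα x ht.le, ← hT'.integral_primitive hα x hs.le,
      sub_eq_sub_iff_add_eq_add, h2, ← h1, add_comm]
  have r1 := hT'.integral_prod_eq ht hs hT' (wl ht) (wr (a := s)) x
  have r2 := hT'.integral_prod_eq ht hs hT' (wr (a := t)) (wl hs) x
  have r3 : opQ T t (opC α T s x) = _ := r1.symm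
  have r4 : opC α T t (opQ T s x) = _ := r2.symm
  rw [r3, r4, l3, ← l1, ← l2, smul_sub, e1, e2]
  simp only [mul_smul]
  have hcomm : ∀ z : ℝ × ℝ, (t - z.1) ^ (1 - α) • (s - z.2) • T z.1 (T z.2 x)
      = (s - z.2) • (t - z.1) ^ (1 - α) • T z.1 (T z.2 x) := fun z => smul_comm _ _ _
  simp only [hcomm]
  rw [← sub_eq_zero, hcanc]
  abel

end

/-! ### The generator in terms of `Q` and `C` -/

theorem integral_beta_kernel {α s : ℝ} (hα : α ∈ Ioo (1:ℝ) 2) (hs : 0 < s) :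
    ∫ σ in (0:ℝ)..s, (s - σ) ^ (1 - α) * σ ^ (α - 2)
      = Real.Gamma (2 - α) * Real.Gamma (α - 1) := by
  have h := Complex.betaIntegral_scaled ((α - 1 : ℝ) : ℂ) ((2 - α : ℝ) : ℂ) hs
  rw [Complex.betaIntegral_eq_Gamma_mul_div _ _ (by simpa using hα.1) (by simpa using hα.2),
    ← Complex.ofReal_add, Complex.Gamma_ofReal, Complex.Gamma_ofReal, Complex.Gamma_ofReal] at h
  have h1 : α - 1 + (2 - α) = 1 := by ring
  rw [h1] at h
  simp only [Complex.ofReal_one, sub_self, Complex.cpow_zero, one_mul, Real.Gamma_one, div_one] at h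
  have h2 : ∫ x in (0:ℝ)..s, (x : ℂ) ^ (((α - 1 : ℝ) : ℂ) - 1) * ((s : ℂ) - x) ^ (((2 - α : ℝ) : ℂ) - 1)
      = ∫ x in (0:ℝ)..s, (((s - x) ^ (1 - α) * x ^ (α - 2) : ℝ) : ℂ) := by
    refine intervalIntegral.integral_congr fun x hx => ?_
    rw [uIcc_of_le hs.le] at hx
    simp only [Complex.ofReal_mul]
    rw [Complex.ofReal_cpow hx.1, Complex.ofReal_cpow (sub_nonneg.2 hx.2), mul_comm]
    push_cast
    ring_nf
  rw [h2, intervalIntegral.integral_ofReal, ← Complex.ofReal_mul] at h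
  rw [Complex.ofReal_injective h, mul_comm]

theorem integral_linear_kernel {α s : ℝ} (hα : α ∈ Ioo (1:ℝ) 2) (hs : 0 < s) :
    ∫ σ in (0:ℝ)..s, (s - σ) * σ ^ (α - 2) = s ^ α / (α * (α - 1)) := by
  have hα1 := hα.1
  have h0 : ∀ σ ∈ uIcc 0 s, (s - σ) * σ ^ (α - 2) = s * σ ^ (α - 2) - σ ^ (α - 1) := by
    intro σ hσ
    rw [uIcc_of_le hs.le] at hσ
    rcases hσ.1.eq_or_lt with h | h
    · subst h
      rw [Real.zero_rpow (by linarith : α - 1 ≠ 0)]; ring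
    · have : σ ^ (α - 1) = σ * σ ^ (α - 2) := by
        rw [← Real.rpow_one_add' h.le (by linarith)]; congr 1; ring
      rw [this]; ring
  rw [intervalIntegral.integral_congr h0, intervalIntegral.integral_sub
    ((intervalIntegral.intervalIntegrable_rpow' (by linarith)).const_mul _)
    (intervalIntegral.intervalIntegrable_rpow' (by linarith)),
    intervalIntegral.integral_const_mul, integral_rpow (Or.inl (by linarith)),
    integral_rpow (Or.inl (by linarith))]
  have e1 : α - 2 + 1 = α - 1 := by ring
  have e2 : α - 1 + 1 = α := by ring
  rw [e1, e2, Real.zero_rpow (by linarith), Real.zero_rpow (by linarith)]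
  have : s ^ α = s * s ^ (α - 1) := by
    rw [← Real.rpow_one_add' hs.le (by linarith)]; congr 1; ring
  rw [this]
  have : α - 1 ≠ 0 := by linarith
  have : α ≠ 0 := by linarith
  field_simp
  ring

section
variable {X : Type*} [NormedAddCommGroup X] [NormedSpace ℝ X] [CompleteSpace X]

theorem Tame.opQ_clm {α t : ℝ} (hα : α ∈ Ioo (1:ℝ) 2) {T : ℝ → X →L[ℝ] X} (hT : Tame α T)
    (ht : 0 < t) : ∃ L : X →L[ℝ] X, ∀ x, L x = opQ T t x :=
  hT.exists_clm ht (Wt.of_continuous hα ht.le (by fun_prop))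

theorem Tame.opC_clm {α t : ℝ} (hα : α ∈ Ioo (1:ℝ) 2) {T : ℝ → X →L[ℝ] X} (hT : Tame α T)
    (ht : 0 < t) : ∃ L : X →L[ℝ] X, ∀ x, L x = opC α T t x :=
  hT.exists_clm ht (Wt.rpow hα)

/-- By the beta integral, `J^{2-α}` maps `r^{α-2}/Γ(α-1)` to the constant `1`. -/
theorem Tame.RLint_eq {α s : ℝ} (hα : α ∈ Ioo (1:ℝ) 2) {T : ℝ → X →L[ℝ] X} (hT : Tame α T)
    (hs : 0 < s) (x : X) :
    RLint (2 - α) s (fun r => T r x - (r ^ (α - 2) / Real.Gamma (α - 1)) • x)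
      = (Real.Gamma (2 - α))⁻¹ • opC α T s x - x := by
  have g1 : Real.Gamma (2 - α) ≠ 0 := (Real.Gamma_pos_of_pos (by linarith [hα.2])).ne'
  have g2 : Real.Gamma (α - 1) ≠ 0 := (Real.Gamma_pos_of_pos (by linarith [hα.1])).ne'
  have e : 2 - α - 1 = 1 - α := by ring
  have i1 : IntervalIntegrable (fun σ => (s - σ) ^ (1 - α) • T σ x) volume 0 s :=
    (intervalIntegrable_iff_integrableOn_Ioc_of_le hs.le).2 (hT.integrable (Wt.rpow hα) x)
  have i2 : IntervalIntegrable (fun σ => ((s - σ) ^ (1 - α) * σ ^ (α - 2))) volume 0 s :=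
    (intervalIntegrable_iff_integrableOn_Ioc_of_le hs.le).2 (Wt.rpow hα).2
  have : ∀ σ, (s - σ) ^ (1 - α) • (T σ x - (σ ^ (α - 2) / Real.Gamma (α - 1)) • x)
      = (s - σ) ^ (1 - α) • T σ x
        - ((s - σ) ^ (1 - α) * σ ^ (α - 2)) • ((Real.Gamma (α - 1))⁻¹ • x) := by
    intro σ
    rw [smul_sub, smul_smul, smul_smul]; congr 2; ring
  simp only [RLint, e, this]
  rw [intervalIntegral.integral_sub i1 ((intervalIntegrable_iff_integrableOn_Ioc_of_le hs.le).2
      (((intervalIntegrable_iff_integrableOn_Ioc_of_le hs.le).1 i2).smul_const _)),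
    intervalIntegral.integral_smul_const, integral_beta_kernel hα hs, smul_sub, opC, smul_smul,
    smul_smul]
  congr 1
  have : (Real.Gamma (2 - α))⁻¹ * (Real.Gamma (2 - α) * Real.Gamma (α - 1)) *
      (Real.Gamma (α - 1))⁻¹ = 1 := by
    field_simp
  rw [this, one_smul]

/-- `Q(s)` behaves like `s^α/Γ(α+1)` as `s → 0+`: the weight `s - σ` is nonnegative, and
`σ^(2-α) T(σ)x` is close to its limit on the whole interval of integration. -/
theorem IsRLFracCosine.tendsto_opQ {α : ℝ} (hα : α ∈ Ioo (1:ℝ) 2) {T : ℝ → X →L[ℝ] X}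
    (hT : IsRLFracCosine α T) (x : X) :
    Tendsto (fun s : ℝ => (Real.Gamma (α + 1) * s ^ (-α)) • opQ T s x) (𝓝[>] 0) (𝓝 x) := by
  have hT' := hT.tame
  have hα1 := hα.1
  have gp : 0 < Real.Gamma (α - 1) := Real.Gamma_pos_of_pos (by linarith)
  have g3 : Real.Gamma (α + 1) = α * (α - 1) * Real.Gamma (α - 1) := by
    rw [Real.Gamma_add_one (by linarith), mul_assoc]
    congr 1
    have := Real.Gamma_add_one (s := α - 1) (by linarith)
    rwa [sub_add_cancel] at this
  have hab : 0 < α * (α - 1) := mul_pos (by linarith) (by linarith)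
  rw [Metric.tendsto_nhds]
  intro ε hε
  have hev := (Metric.tendsto_nhds.1 (hT.2.1 x)) (ε / 2 / Real.Gamma (α - 1)) (by positivity)
  obtain ⟨δ, hδ, hδ'⟩ := mem_nhdsGT_iff_exists_Ioo_subset.1 hev
  have hδ0 : (0:ℝ) < δ := hδ
  filter_upwards [Ioo_mem_nhdsGT hδ0] with s hs
  have hs0 : 0 < s := hs.1
  have i1 : IntervalIntegrable (fun σ => (s - σ) • T σ x) volume 0 s :=
    (intervalIntegrable_iff_integrableOn_Ioc_of_le hs.1.le).2
      (hT'.integrable (Wt.of_continuous hα hs.1.le (by fun_prop)) x)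
  have i2 : IntervalIntegrable (fun σ => ((s - σ) * σ ^ (α - 2))) volume 0 s :=
    (intervalIntegrable_iff_integrableOn_Ioc_of_le hs.1.le).2
      (Wt.of_continuous hα hs.1.le (by fun_prop)).2
  have hdiff : opQ T s x - (s ^ α / (α * (α - 1))) • ((Real.Gamma (α - 1))⁻¹ • x)
      = ∫ σ in (0:ℝ)..s, ((s - σ) • T σ x
        - ((s - σ) * σ ^ (α - 2)) • ((Real.Gamma (α - 1))⁻¹ • x)) := by
    rw [intervalIntegral.integral_sub i1 ((intervalIntegrable_iff_integrableOn_Ioc_of_le hs.1.le).2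
        (((intervalIntegrable_iff_integrableOn_Ioc_of_le hs.1.le).1 i2).smul_const _)),
      intervalIntegral.integral_smul_const, integral_linear_kernel hα hs.1, opQ]
  have hbound : ‖opQ T s x - (s ^ α / (α * (α - 1))) • ((Real.Gamma (α - 1))⁻¹ • x)‖
      ≤ (s ^ α / (α * (α - 1))) * (ε / 2 / Real.Gamma (α - 1)) := by
    rw [hdiff, ← integral_linear_kernel hα hs.1, ← intervalIntegral.integral_mul_const]
    refine intervalIntegral.norm_integral_le_of_norm_le hs.1.le ?_ (i2.mul_const _)
    refine Eventually.of_forall fun σ hσ => ?_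
    rcases hσ.2.eq_or_lt with h | h
    · simp [h]
    have hp : 0 < σ ^ (α - 2) := Real.rpow_pos_of_pos hσ.1 _
    have hl : 0 < s - σ := sub_pos.2 h
    have h1 : σ ^ (α - 2) * σ ^ (2 - α) = 1 := by
      rw [← Real.rpow_add hσ.1]; simp
    have h2 : dist (σ ^ (2 - α) • T σ x) ((Real.Gamma (α - 1))⁻¹ • x)
        < ε / 2 / Real.Gamma (α - 1) := hδ' ⟨hσ.1, hσ.2.trans_lt hs.2⟩
    rw [dist_eq_norm] at h2
    have h3 : (s - σ) • T σ x - ((s - σ) * σ ^ (α - 2)) • ((Real.Gamma (α - 1))⁻¹ • x)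
        = ((s - σ) * σ ^ (α - 2)) • (σ ^ (2 - α) • T σ x - (Real.Gamma (α - 1))⁻¹ • x) := by
      rw [smul_sub]
      congr 1
      rw [smul_smul, mul_assoc, h1, mul_one]
    rw [h3, norm_smul, Real.norm_of_nonneg (by positivity)]
    gcongr
  have hsa : 0 < s ^ α := Real.rpow_pos_of_pos hs.1 _
  have hfac : (Real.Gamma (α + 1) * s ^ (-α)) * (s ^ α / (α * (α - 1)) * (Real.Gamma (α - 1))⁻¹) = 1 := by
    rw [g3, Real.rpow_neg hs.1.le]
    field_simp
  rw [dist_eq_norm]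
  have hx : (Real.Gamma (α + 1) * s ^ (-α)) • opQ T s x - x = (Real.Gamma (α + 1) * s ^ (-α)) •
      (opQ T s x - (s ^ α / (α * (α - 1))) • ((Real.Gamma (α - 1))⁻¹ • x)) := by
    rw [smul_sub, smul_smul (s ^ α / (α * (α - 1))), smul_smul _ _ x, hfac, one_smul]
  have hκ : 0 < Real.Gamma (α + 1) * s ^ (-α) :=
    mul_pos (Real.Gamma_pos_of_pos (by linarith)) (Real.rpow_pos_of_pos hs.1 _)
  rw [hx, norm_smul, Real.norm_of_nonneg hκ.le]
  calc _ ≤ (Real.Gamma (α + 1) * s ^ (-α)) *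
        ((s ^ α / (α * (α - 1))) * (ε / 2 / Real.Gamma (α - 1))) := by gcongr
    _ = (Real.Gamma (α + 1) * s ^ (-α)) * (s ^ α / (α * (α - 1)) * (Real.Gamma (α - 1))⁻¹)
        * (ε / 2) := by ring
    _ < ε := by rw [hfac]; linarith

/-- The key identity in the form `Q(t) (Γ⁻¹ C(s) - 1) = (Γ⁻¹ C(t) - 1) Q(s)`. -/
theorem IsRLFracCosine.key_identity' {α : ℝ} (hα : α ∈ Ioo (1:ℝ) 2) {T : ℝ → X →L[ℝ] X}
    (hT : IsRLFracCosine α T) (x : X) {t s : ℝ} (ht : 0 < t) (hs : 0 < s) :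
    opQ T t ((Real.Gamma (2 - α))⁻¹ • opC α T s x - x)
      = (Real.Gamma (2 - α))⁻¹ • opC α T t (opQ T s x) - opQ T s x := by
  have g1 : Real.Gamma (2 - α) ≠ 0 := (Real.Gamma_pos_of_pos (by linarith [hα.2])).ne'
  have h := hT.key_identity hα x ht hs
  obtain ⟨L, hL⟩ := hT.tame.opQ_clm hα ht
  rw [← hL, map_sub, map_smul, hL, hL]
  have h2 : opQ T t x - opQ T s x = (Real.Gamma (2 - α))⁻¹ •
      (opQ T t (opC α T s x) - opC α T t (opQ T s x)) := by
    rw [← h, smul_smul, inv_mul_cancel₀ g1, one_smul]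
  rw [smul_sub] at h2
  rw [sub_eq_sub_iff_add_eq_add] at h2 ⊢
  rw [← sub_eq_zero] at h2 ⊢
  rw [← neg_eq_zero, ← h2]; abel

/-- `Q(t)x` lies in the domain of the generator, whose value there is `Γ⁻¹ C(t)x - x`. -/
theorem IsRLFracCosine.genLimit_opQ {α : ℝ} (hα : α ∈ Ioo (1:ℝ) 2) {T : ℝ → X →L[ℝ] X}
    (hT : IsRLFracCosine α T) (x : X) {t : ℝ} (ht : 0 < t) :
    GenLimit α T (opQ T t x) ((Real.Gamma (2 - α))⁻¹ • opC α T t x - x) := by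
  refine (hT.tendsto_opQ hα _).congr' ?_
  filter_upwards [self_mem_nhdsWithin] with s hs
  rw [hT.tame.RLint_eq hα hs, hT.key_identity' hα x hs ht]

/-- On the domain of the generator, `Q(t) A x = Γ⁻¹ C(t)x - x`. -/
theorem IsRLFracCosine.of_genLimit {α : ℝ} (hα : α ∈ Ioo (1:ℝ) 2) {T : ℝ → X →L[ℝ] X}
    (hT : IsRLFracCosine α T) {x y : X} (hxy : GenLimit α T x y) {t : ℝ} (ht : 0 < t) :
    opQ T t y = (Real.Gamma (2 - α))⁻¹ • opC α T t x - x := by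
  obtain ⟨L, hL⟩ := hT.tame.opQ_clm hα ht
  obtain ⟨R, hR⟩ := hT.tame.opC_clm hα ht
  have h1 := (L.continuous.tendsto y).comp hxy
  have hc : Continuous fun z => (Real.Gamma (2 - α))⁻¹ • R z - z := by fun_prop
  have h2 := (hc.tendsto x).comp (hT.tendsto_opQ hα x)
  have h3 := tendsto_nhds_unique (h1.congr' ?_) h2
  · rw [← hL, h3, hR]
  · filter_upwards [self_mem_nhdsWithin] with s hs
    simp only [Function.comp]
    rw [hT.tame.RLint_eq hα hs, map_smul, hL, hT.key_identity' hα x ht hs, map_smul, hR, smul_sub,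
      smul_comm]

end

/-! ### Two families with the same generator -/

section
variable {X : Type*} [NormedAddCommGroup X] [NormedSpace ℝ X] [CompleteSpace X]

/-- The bounded operator `T σ` is moved inside the integral over `τ`. -/
theorem Tame.iter {α a b : ℝ} {T S : ℝ → X →L[ℝ] X} (hS : Tame α S) (hb : 0 ≤ b)
    {v w : ℝ → ℝ} (hw : Wt α b w) (x : X) :
    ∫ σ in (0:ℝ)..a, v σ • T σ (∫ τ in (0:ℝ)..b, w τ • S τ x)
      = ∫ σ in (0:ℝ)..a, ∫ τ in (0:ℝ)..b, (v σ * w τ) • T σ (S τ x) := by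
  refine intervalIntegral.integral_congr fun σ _ => ?_
  simp only [mul_smul]
  rw [intervalIntegral.integral_smul,
    ← (T σ).intervalIntegral_comp_comm
      ((intervalIntegrable_iff_integrableOn_Ioc_of_le hb).2 (hS.integrable hw x))]
  simp only [map_smul]

/-- The mixed version of the key identity for two families with a common generator. -/
theorem cross_identity {α : ℝ} (hα : α ∈ Ioo (1:ℝ) 2) {T S : ℝ → X →L[ℝ] X}
    (hT : IsRLFracCosine α T) (hS : IsRLFracCosine α S)
    (hgen : ∀ x y : X, GenLimit α T x y ↔ GenLimit α S x y) (x : X) {r t : ℝ}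
    (hr : 0 < r) (ht : 0 < t) :
    Real.Gamma (2 - α) • (opQ T r x - opQ S t x)
      = opQ T r (opC α S t x) - opC α T r (opQ S t x) := by
  have g1 : Real.Gamma (2 - α) ≠ 0 := (Real.Gamma_pos_of_pos (by linarith [hα.2])).ne'
  have h := hT.of_genLimit hα ((hgen _ _).2 (hS.genLimit_opQ hα x ht)) hr
  obtain ⟨L, hL⟩ := hT.tame.opQ_clm hα hr
  rw [← hL, map_sub, map_smul, hL, hL] at h
  have h' := congrArg (fun z => Real.Gamma (2 - α) • z) h
  simp only [smul_sub, smul_smul, mul_inv_cancel₀ g1, one_smul] at h'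
  rw [smul_sub]
  rw [sub_eq_sub_iff_add_eq_add] at h' ⊢
  rw [add_comm, ← sub_eq_zero] at h' ⊢
  rw [← neg_eq_zero, ← h']; abel

/-- The convolutions `Q_T * C_S` and `C_T * Q_S` coincide, since their scalar kernels do. -/
theorem Tame.integral_convolution_sub_eq_zero {α : ℝ} (hα : α ∈ Ioo (1:ℝ) 2) {T S : ℝ → X →L[ℝ] X}
    (hT : Tame α T) (hS : Tame α S) (x : X) {u : ℝ} (hu : 0 < u) :
    ∫ w in (0:ℝ)..u, (opQ T (u - w) (opC α S w x) - opC α T (u - w) (opQ S w x)) = 0 := by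
  have hq : -1 < 1 - α := by linarith [hα.2]
  have w1 : Wt α u (fun _ => 1) := Wt.of_continuous hα hu.le continuous_const
  have i0 := hT.integrable_prod hu hu hS w1 w1 x
  simp only [mul_one, one_smul] at i0
  let k₁ : ℝ → ℝ × ℝ → ℝ := fun w z => ((u - w) - z.1) * (w - z.2) ^ (1 - α)
  let k₂ : ℝ → ℝ × ℝ → ℝ := fun w z => ((u - w) - z.1) ^ (1 - α) * (w - z.2)
  -- The reflection `w ↦ u - σ + τ - w` exchanges the two kernels.
  have hrefl : ∀ z w, k₂ w z = k₁ (u - z.1 + z.2 - w) z := fun z w => by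
    simp only [k₁, k₂]
    rw [show u - (u - z.1 + z.2 - w) - z.1 = w - z.2 by ring,
      show u - z.1 + z.2 - w - z.2 = u - w - z.1 by ring, mul_comm]
  have hk1i : ∀ (z : ℝ × ℝ) a b, IntervalIntegrable (fun w => k₁ w z) volume a b := fun z a b =>
    (intervalIntegrable_shift_rpow hq a b z.2).continuousOn_mul (by fun_prop)
  have hk2i : ∀ (z : ℝ × ℝ) a b, IntervalIntegrable (fun w => k₂ w z) volume a b := fun z a b => by
    simp only [hrefl]
    have := (hk1i z (u - z.1 + z.2 - a) (u - z.1 + z.2 - b)).comp_sub_left (u - z.1 + z.2)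
    simpa using this
  -- The `max` keeps the interval of admissible `w` nonreversed when `σ + τ > u`, where it is empty.
  have hB : ∀ z ∈ Ioo 0 u ×ˢ Ioo 0 u, 0 ≤ z.2 ∧ z.2 ≤ max z.2 (u - z.1) ∧
      max z.2 (u - z.1) ≤ u := fun z hz =>
    ⟨hz.2.1.le, le_max_left _ _, max_le hz.2.2.le (by linarith [hz.1.1])⟩
  have hiff : ∀ z ∈ Ioo 0 u ×ˢ Ioo 0 u, ∀ w ∈ Ioo 0 u,
      (z.1 < u - w ∧ z.2 < w ↔ z.2 < w ∧ w < max z.2 (u - z.1)) := by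
    intro z hz w hw
    rw [lt_max_iff]
    constructor
    · rintro ⟨h1, h2⟩; exact ⟨h2, Or.inr (by linarith)⟩
    · rintro ⟨h1, h2 | h2⟩
      · linarith
      · exact ⟨by linarith, h1⟩
  have hwb : ∀ z : ℝ × ℝ, ∀ w ∈ Ioo z.2 (max z.2 (u - z.1)), 0 < w - z.2 ∧ 0 < u - w - z.1 := by
    intro z w hw
    rcases lt_max_iff.1 hw.2 with h | h
    · exact absurd h hw.1.not_gt
    · exact ⟨sub_pos.2 hw.1, by linarith⟩
  have heq : ∀ z : ℝ × ℝ, ∫ w in z.2..max z.2 (u - z.1), k₂ w z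
      = ∫ w in z.2..max z.2 (u - z.1), k₁ w z := by
    intro z
    rcases le_total (u - z.1) z.2 with h | h
    · simp [max_eq_left h]
    · simp only [hrefl, max_eq_right h]
      rw [intervalIntegral.integral_comp_sub_left (fun w => k₁ w z)]
      congr 1 <;> ring
  have hc1 : ∀ z ∈ Ioo 0 u ×ˢ Ioo 0 u, ∫ w in z.2..max z.2 (u - z.1), k₁ w z
      ≤ u * (u ^ (2 - α) / (2 - α)) := by
    intro z hz
    obtain ⟨h0, h1, h2⟩ := hB z hz
    have hβ : 0 < 2 - α := by linarith [hα.2]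
    calc _ ≤ ∫ w in z.2..max z.2 (u - z.1), u * (w - z.2) ^ (1 - α) := by
          refine intervalIntegral.integral_mono_on h1 (hk1i _ _ _)
            ((intervalIntegrable_shift_rpow hq _ _ _).const_mul _) fun w hw => ?_
          refine mul_le_mul_of_nonneg_right ?_ (Real.rpow_nonneg (sub_nonneg.2 hw.1) _)
          linarith [hw.1, hz.1.1]
      _ = u * ((max z.2 (u - z.1) - z.2) ^ (2 - α) / (2 - α)) := by
          rw [intervalIntegral.integral_const_mul, integral_shift_rpow hq, sub_self,
            show 1 - α + 1 = 2 - α by ring, Real.zero_rpow hβ.ne', sub_zero]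
      _ ≤ _ := by
          have : 0 ≤ max z.2 (u - z.1) - z.2 := sub_nonneg.2 h1
          gcongr
          linarith
  obtain ⟨a1, -, c1⟩ := fubini_pass hu.le i0 (k := k₁) (by fun_prop)
    (f := fun w => u - w) (g := fun w => w) (by fun_prop) measurable_id
    (fun w hw => ⟨by linarith [hw.2], by linarith [hw.1]⟩) (fun w hw => ⟨hw.1.le, hw.2.le⟩)
    hB hiff (fun z _ => hk1i z _ _)
    (fun z _ w hw => mul_nonneg (hwb z w hw).2.le (Real.rpow_nonneg (hwb z w hw).1.le _)) hc1
  obtain ⟨a2, -, c2⟩ := fubini_pass hu.le i0 (k := k₂) (by fun_prop)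
    (f := fun w => u - w) (g := fun w => w) (by fun_prop) measurable_id
    (fun w hw => ⟨by linarith [hw.2], by linarith [hw.1]⟩) (fun w hw => ⟨hw.1.le, hw.2.le⟩)
    hB hiff (fun z _ => hk2i z _ _)
    (fun z _ w hw => mul_nonneg (Real.rpow_nonneg (hwb z w hw).2.le _) (hwb z w hw).1.le)
    (fun z hz => (heq z).trans_le (hc1 z hz))
  simp only [heq] at c2
  have hcongr : ∀ᵐ w, w ∈ uIoc 0 u →
      opQ T (u - w) (opC α S w x) - opC α T (u - w) (opQ S w x)
      = (∫ σ in (0:ℝ)..(u - w), ∫ τ in (0:ℝ)..w, k₁ w (σ, τ) • T σ (S τ x))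
        - ∫ σ in (0:ℝ)..(u - w), ∫ τ in (0:ℝ)..w, k₂ w (σ, τ) • T σ (S τ x) := by
    refine Eventually.of_forall fun w hw => ?_
    rw [uIoc_of_le hu.le] at hw
    congr 1
    · exact hS.iter (v := fun σ => u - w - σ) hw.1.le (Wt.rpow hα) x
    · exact hS.iter (v := fun σ => (u - w - σ) ^ (1 - α)) (w := fun τ => w - τ) hw.1.le
        (Wt.of_continuous hα hw.1.le (by fun_prop)) x
  rw [intervalIntegral.integral_congr_ae hcongr, intervalIntegral.integral_sub a1 a2, c1, c2,
    sub_self]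

theorem eq_zero_of_integral_eq_zero {f : ℝ → X} (hf : ContinuousOn f (Ioi 0))
    (hi : ∀ t > 0, IntervalIntegrable f volume 0 t) (h0 : ∀ t > 0, ∫ w in (0:ℝ)..t, f w = 0)
    {t : ℝ} (ht : 0 < t) : f t = 0 := by
  have hd := intervalIntegral.integral_hasDerivAt_right (hi t ht)
    (hf.stronglyMeasurableAtFilter isOpen_Ioi t ht) (hf.continuousAt (Ioi_mem_nhds ht))
  have hz : (fun u => ∫ w in (0:ℝ)..u, f w) =ᶠ[𝓝 t] fun _ => 0 :=
    Filter.mem_of_superset (Ioi_mem_nhds ht) fun u hu => h0 u hu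
  exact (hd.congr_of_eventuallyEq hz.symm).unique (hasDerivAt_const t 0)

theorem continuousOn_primitive_zero {f : ℝ → X} (hi : ∀ t > 0, IntervalIntegrable f volume 0 t) :
    ContinuousOn (fun t => ∫ w in (0:ℝ)..t, f w) (Ici 0) := by
  intro t ht
  have ht' : (0:ℝ) ≤ t := ht
  have hc := intervalIntegral.continuousOn_primitive_interval' (hi (t + 1) (by linarith))
    left_mem_uIcc
  rw [uIcc_of_le (by linarith)] at hc
  refine (hc t ⟨ht', by linarith⟩).mono_of_mem_nhdsWithin ?_
  rw [← Ici_inter_Iic]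
  exact inter_mem_nhdsWithin _ (Iic_mem_nhds (by linarith))

theorem intervalIntegrable_of_continuousOn_Ici {f : ℝ → X} (hf : ContinuousOn f (Ici 0)) :
    ∀ t > 0, IntervalIntegrable f volume 0 t := fun t ht =>
  (hf.mono fun y hy => by rw [uIcc_of_le (le_of_lt ht)] at hy; exact hy.1).intervalIntegrable

theorem Tame.continuousOn_opQ {α : ℝ} (hα : α ∈ Ioo (1:ℝ) 2) {T : ℝ → X →L[ℝ] X}
    (hT : Tame α T) (x : X) : ContinuousOn (fun t => opQ T t x) (Ici 0) :=
  (continuousOn_primitive_zero (intervalIntegrable_of_continuousOn_Ici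
    (continuousOn_primitive_zero fun _ ht => hT.intervalIntegrable hα x (le_of_lt ht)))).congr
    fun _ ht => (hT.integral_primitive hα x ht).symm

theorem integral_opQ_eq {α : ℝ} (hα : α ∈ Ioo (1:ℝ) 2) {T S : ℝ → X →L[ℝ] X}
    (hT : IsRLFracCosine α T) (hS : IsRLFracCosine α S)
    (hgen : ∀ x y : X, GenLimit α T x y ↔ GenLimit α S x y) (x : X) {u : ℝ} (hu : 0 < u) :
    ∫ w in (0:ℝ)..u, (opQ T w x - opQ S w x) = 0 := by
  have g1 : Real.Gamma (2 - α) ≠ 0 := (Real.Gamma_pos_of_pos (by linarith [hα.2])).ne'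
  have iT := intervalIntegrable_of_continuousOn_Ici (hT.tame.continuousOn_opQ hα x) u hu
  have iS := intervalIntegrable_of_continuousOn_Ici (hS.tame.continuousOn_opQ hα x) u hu
  have iT' : IntervalIntegrable (fun w => opQ T (u - w) x) volume 0 u := by
    have := (iT.comp_sub_left u).symm
    simpa using this
  have h : ∫ w in (0:ℝ)..u, Real.Gamma (2 - α) • (opQ T (u - w) x - opQ S w x) = 0 := by
    rw [← hT.tame.integral_convolution_sub_eq_zero hα hS.tame x hu, intervalIntegral.integral_of_le hu.le,
      intervalIntegral.integral_of_le hu.le, integral_Ioc_eq_integral_Ioo,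
      integral_Ioc_eq_integral_Ioo]
    exact setIntegral_congr_fun measurableSet_Ioo fun w hw =>
      cross_identity hα hT hS hgen x (sub_pos.2 hw.2) hw.1
  rw [intervalIntegral.integral_smul, smul_eq_zero_iff_right g1, intervalIntegral.integral_sub iT' iS,
    intervalIntegral.integral_comp_sub_left (fun w => opQ T w x), sub_self, sub_zero] at h
  rw [intervalIntegral.integral_sub iT iS, h]

end

/-- A (closed densely defined) operator admits at most one Riemann-Liouville `α`-order
fractional cosine function: if `T` and `S` have the same generator then `T = S`. -/
theorem rl_frac_cosine_unique
    {X : Type*} [NormedAddCommGroup X] [NormedSpace ℝ X] [CompleteSpace X]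
    (α : ℝ) (hα : α ∈ Set.Ioo (1:ℝ) 2) (T S : ℝ → X →L[ℝ] X)
    (hT : IsRLFracCosine α T) (hS : IsRLFracCosine α S)
    (hgen : ∀ x y : X, GenLimit α T x y ↔ GenLimit α S x y) :
    ∀ t > (0:ℝ), T t = S t := by
  intro t ht
  ext x
  have iT : ∀ t > 0, IntervalIntegrable (fun σ => T σ x) volume 0 t := fun t ht =>
    hT.tame.intervalIntegrable hα x (le_of_lt ht)
  have iS : ∀ t > 0, IntervalIntegrable (fun σ => S σ x) volume 0 t := fun t ht =>
    hS.tame.intervalIntegrable hα x (le_of_lt ht)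
  have cT := continuousOn_primitive_zero iT
  have cS := continuousOn_primitive_zero iS
  -- `∫ Q(w)x dw`, `Q(·)x` and `∫ T(σ)x dσ` are differentiated one after the other.
  have hQc : ContinuousOn (fun t => opQ T t x - opQ S t x) (Ici 0) :=
    (hT.tame.continuousOn_opQ hα x).sub (hS.tame.continuousOn_opQ hα x)
  have hQ : ∀ t > 0, opQ T t x - opQ S t x = 0 := fun t ht =>
    eq_zero_of_integral_eq_zero (hQc.mono Ioi_subset_Ici_self)
      (intervalIntegrable_of_continuousOn_Ici hQc)
      (fun u hu => integral_opQ_eq hα hT hS hgen x hu) ht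
  have hP : ∀ t > 0, (∫ σ in (0:ℝ)..t, T σ x) - ∫ σ in (0:ℝ)..t, S σ x = 0 := fun t ht =>
    eq_zero_of_integral_eq_zero
      (f := fun t => (∫ σ in (0:ℝ)..t, T σ x) - ∫ σ in (0:ℝ)..t, S σ x) ((cT.sub cS).mono Ioi_subset_Ici_self)
      (intervalIntegrable_of_continuousOn_Ici (cT.sub cS))
      (fun u hu => by
        rw [intervalIntegral.integral_sub (intervalIntegrable_of_continuousOn_Ici cT u hu)
          (intervalIntegrable_of_continuousOn_Ici cS u hu),
          hT.tame.integral_primitive hα x (le_of_lt hu),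
          hS.tame.integral_primitive hα x (le_of_lt hu), hQ u hu]) ht
  exact sub_eq_zero.1 (eq_zero_of_integral_eq_zero (f := fun t => T t x - S t x) ((hT.1 x).sub (hS.1 x))
    (fun u hu => (iT u hu).sub (iS u hu))
    (fun u hu => by rw [intervalIntegral.integral_sub (iT u hu) (iS u hu), hP u hu]) ht)
end
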